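/- Let G be a finite undirected loopless multigraph. The independence polytope P(M(G)) of the graphic matroid of G is a Gorenstein polytope if and only if there exists an integer δ ≥ 2 such that G is the (δ−1)-blow-up of a graph H = (V,E) satisfying the condition (♣)_δ: (δ−1)|E(S)| + 1 = δ(|S|−1) for every subset S ⊆ V inducing a 2-connected subgraph of H. -/

import Mathlib

/-!
The facets of the independence polytope `P` of a graphic matroid are the coordinate facets
`x e = 0` and the facets `x(E(S)) = |S| - 1`, where `S` runs through the vertex sets inducing a
`2`-connected subgraph (`facet_reduced_iff`); the corresponding linear forms are already reduced.
Hence a Gorenstein point must be the all-ones vector, and it is one for `δ` exactly when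
`δ(|S| - 1) - |E(S)| = 1` for all such `S` (`isDeltaGorenstein_iff`).  For a pair of adjacent
vertices this equation says that every edge of `G` has multiplicity `δ - 1`, so that `G` is a
blow-up of its underlying simple graph (`isBlowUp_of_card`); for a blow-up the equations are the
condition `(♣)_δ` (`IsBlowUp.clubCond_iff`).  The graph without edges is treated separately.

Forests are handled through the counting criterion `Sparse`: every nonempty vertex set `S` spans
at most `|S| - 1` edges of a forest (`forest_iff_sparse`), and `S` is `Tight` if it spans exactly
that many.  Tight sets are closed under intersecting unions and intersections.

* The rank form of a `2`-connected `S` is a facet form (`vfacet_setForm`): a linear form vanishing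
  on all forests for which `S` is tight is constant on the edges at each vertex `v` of `S`, because
  a spanning tree of `S - v` may be completed by any of these edges, and so it is constant on
  `E(S)` by connectedness.
* Conversely (`VFacet.classify`), a facet form other than a coordinate form reads `c - w` with `w`
  nonnegative and nonzero, and the forests on the facet are those of maximum weight.  All of them
  are tight on some common set, namely on a component of the graph formed by the edges of largest
  weight, and a minimal set of at least two vertices that is tight for all of them is `2`-connected
  (`exists_common_tight`).
* That the all-ones vector lies in `δP` follows by separating a point from `P`: a form that is
  negative at a point but nonnegative on a full-dimensional cone can be replaced by a facet form
  with the same property (`nonneg_of_facets_nonneg`).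
-/

open SimpleGraph
open scoped Pointwise

namespace Gor

/-! ### Graph-theoretic notions -/

/-- A graph is `2`-connected if it is connected and remains connected after deletion of any
single vertex.  A single edge `K₂` counts as `2`-connected. -/
def IsTwoConnected {V : Type*} (G : SimpleGraph V) : Prop :=
  G.Connected ∧ ∀ v : V, (G.induce {u : V | u ≠ v}).Connected

/-- `E(S)`: the set of edges of `G` with both endpoints in `S`. -/
def edgesIn {V : Type*} (G : SimpleGraph V) (S : Set V) : Set (Sym2 V) :=
  {e ∈ G.edgeSet | ∀ v ∈ e, v ∈ S}

/-- The simple graph obtained from `G` by contracting all edges in `F`: its vertices are the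
connected components of the graph with edge set `F`, two being adjacent if some edge of `G`
joins them. -/
def contractEdges {V : Type*} (G : SimpleGraph V) (F : Set (Sym2 V)) :
    SimpleGraph (SimpleGraph.fromEdgeSet F).ConnectedComponent :=
  SimpleGraph.fromRel fun c d => ∃ u v : V, G.Adj u v ∧
    (SimpleGraph.fromEdgeSet F).connectedComponentMk u = c ∧
    (SimpleGraph.fromEdgeSet F).connectedComponentMk v = d

/-- `S` is a good flat of `G`: the induced subgraph `G[S]` is `2`-connected and the contraction
of all edges of `E(S)` in `G` is `2`-connected. -/
def IsGoodFlat {V : Type*} (G : SimpleGraph V) (S : Set V) : Prop :=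
  IsTwoConnected (G.induce S) ∧ IsTwoConnected (contractEdges G (edgesIn G S))

/-- The weight function `w : E → {1, δ-1}` with `w e = 1` whenever `G∖e` is `2`-connected and
`w e = δ - 1` whenever `G/e` is `2`-connected. -/
def IsCanonicalWeight {V : Type*} (G : SimpleGraph V) (δ : ℕ) (w : Sym2 V → ℕ) : Prop :=
  (∀ e ∈ G.edgeSet, w e = 1 ∨ w e = δ - 1) ∧
  (∀ e ∈ G.edgeSet, IsTwoConnected (G.deleteEdges {e}) → w e = 1) ∧
  (∀ e ∈ G.edgeSet, IsTwoConnected (contractEdges G {e}) → w e = δ - 1)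

/-- A `2`-connected graph `G` satisfies `(♠)_δ` via the weight function `w`. -/
def SatisfiesSpade {V : Type*} (G : SimpleGraph V) (δ : ℕ) (w : Sym2 V → ℕ) : Prop :=
  IsTwoConnected G ∧ IsCanonicalWeight G δ w ∧
  (∑ᶠ e ∈ G.edgeSet, w e) = δ * (Nat.card V - 1) ∧
  ∀ S : Set V, IsGoodFlat G S → (∑ᶠ e ∈ edgesIn G S, w e) + 1 = δ * (S.ncard - 1)

/-- The number of `2`-connected components (blocks) of a graph: the number of inclusion-maximal
vertex subsets inducing a `2`-connected subgraph. -/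
noncomputable def numBlocks {V : Type*} (G : SimpleGraph V) : ℕ :=
  {S : Set V | IsTwoConnected (G.induce S) ∧
    ∀ T : Set V, S ⊆ T → IsTwoConnected (G.induce T) → S = T}.ncard

/-! ### Lattice polytopes and the Gorenstein property -/

/-- A point of `ℝ^η` is a lattice point if all its coordinates are integers. -/
def IsLatticePoint {η : Type*} (x : η → ℝ) : Prop := ∀ i, ∃ z : ℤ, x i = z

/-- The cone over a polytope `P ⊆ ℝ^η`, living in `ℝ^η × ℝ`. -/
def coneOver {η : Type*} (P : Set (η → ℝ)) : Set ((η → ℝ) × ℝ) :=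
  {y | ∃ t : ℝ, ∃ p ∈ P, 0 ≤ t ∧ y = (t • p, t)}

/-- The lattice affinely spanned by the lattice points of `P`, placed at height one;
i.e. the subgroup of `ℝ^η × ℝ` generated by `{(p, 1) : p a lattice point of P}`. -/
def coneLattice {η : Type*} (P : Set (η → ℝ)) : Submodule ℤ ((η → ℝ) × ℝ) :=
  Submodule.span ℤ {y | ∃ p ∈ P, IsLatticePoint p ∧ y = (p, 1)}

/-- `h` is a linear form cutting out a facet-supporting hyperplane of the cone over `P`:
it is nonnegative on the cone and vanishes on a subset of the cone spanning one dimension less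
than the cone itself. -/
def IsFacetForm {η : Type*} (P : Set (η → ℝ)) (h : ((η → ℝ) × ℝ) →ₗ[ℝ] ℝ) : Prop :=
  (∀ y ∈ coneOver P, 0 ≤ h y) ∧
  Module.finrank ℝ (Submodule.span ℝ {y ∈ coneOver P | h y = 0}) + 1 =
    Module.finrank ℝ (Submodule.span ℝ (coneOver P))

/-- `h` is reduced with respect to the lattice spanned by `P`: it takes integer values on the
lattice and attains the value `1` there. -/
def IsReducedForm {η : Type*} (P : Set (η → ℝ)) (h : ((η → ℝ) × ℝ) →ₗ[ℝ] ℝ) : Prop :=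
  (∀ y ∈ coneLattice P, ∃ z : ℤ, h y = z) ∧ ∃ y ∈ coneLattice P, h y = 1

/-- A polytope `P`, regarded as full-dimensional in the affine lattice it spans, is
`δ`-Gorenstein if there is a lattice point `v ∈ δP` with `h (v, δ) = 1` for the reduced
equation `h` of every facet-supporting hyperplane of the cone over `P`. -/
def IsDeltaGorenstein {η : Type*} (P : Set (η → ℝ)) (δ : ℕ) : Prop :=
  ∃ v : η → ℝ, v ∈ (δ : ℝ) • P ∧ (v, (δ : ℝ)) ∈ coneLattice P ∧
    ∀ h : ((η → ℝ) × ℝ) →ₗ[ℝ] ℝ, IsFacetForm P h → IsReducedForm P h → h (v, (δ : ℝ)) = 1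

/-- A polytope is Gorenstein if it is `δ`-Gorenstein for some positive integer `δ`. -/
def IsGorenstein {η : Type*} (P : Set (η → ℝ)) : Prop :=
  ∃ δ : ℕ, 0 < δ ∧ IsDeltaGorenstein P δ

/-! ### Graphic matroids of simple graphs and their polytopes -/

/-- An independent set of the graphic matroid of `G`: a set of edges forming a forest. -/
def IsGraphicIndep {V : Type*} (G : SimpleGraph V) (I : Set (Sym2 V)) : Prop :=
  I ⊆ G.edgeSet ∧ (SimpleGraph.fromEdgeSet I).IsAcyclic

/-- A basis of the graphic matroid of `G`: a maximal forest (spanning forest). -/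
def IsGraphicBasis {V : Type*} (G : SimpleGraph V) (B : Set (Sym2 V)) : Prop :=
  IsGraphicIndep G B ∧ ∀ e ∈ G.edgeSet, e ∉ B → ¬ IsGraphicIndep G (insert e B)

/-- The base polytope `B(M(G))` of the graphic matroid of `G`: the convex hull of the
indicator vectors of the bases. -/
def basePolytope {V : Type*} (G : SimpleGraph V) : Set (Sym2 V → ℝ) :=
  convexHull ℝ {x | ∃ B : Set (Sym2 V), IsGraphicBasis G B ∧
    x = B.indicator fun _ => (1 : ℝ)}

/-- The base polytope `B(M(G))`, regarded inside `ℝ^E` where `E` is the edge set of `G`. -/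
def basePolytopeE {V : Type*} (G : SimpleGraph V) : Set (↥G.edgeSet → ℝ) :=
  convexHull ℝ {x | ∃ B : Set (Sym2 V), IsGraphicBasis G B ∧
    x = (Subtype.val ⁻¹' B).indicator fun _ => (1 : ℝ)}

/-- A homogeneous inequality `g x ≥ 0` is valid for `P` and defines a facet (a supporting
hyperplane whose intersection with `P` has affine dimension one less than `P`). -/
def IsSupportingFaceIneq {α : Type*} (P : Set (α → ℝ)) (g : (α → ℝ) → ℝ) : Prop :=
  (∀ x ∈ P, 0 ≤ g x) ∧
  Module.finrank ℝ (vectorSpan ℝ {x ∈ P | g x = 0}) + 1 =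
    Module.finrank ℝ (vectorSpan ℝ P)

/-! ### Multigraphs -/

/-- A finite undirected loopless multigraph on a vertex type `V` with edge type `E`. -/
structure Multigraph (V E : Type*) where
  ends : E → Sym2 V
  loopless : ∀ e, ¬ (ends e).IsDiag

/-- The underlying simple graph of a multigraph. -/
def Multigraph.toSimple {V E : Type*} (G : Multigraph V E) : SimpleGraph V :=
  SimpleGraph.fromEdgeSet (Set.range G.ends)

/-- `E(S)` for a multigraph: the set of edges with both endpoints in `S`. -/
def Multigraph.edgesIn {V E : Type*} (G : Multigraph V E) (S : Set V) : Set E :=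
  {e | ∀ v ∈ G.ends e, v ∈ S}

/-- A set of edges of a multigraph is a forest (an independent set of the graphic matroid):
no two parallel edges and no cycle. -/
def IsMultiForest {V E : Type*} (G : Multigraph V E) (I : Set E) : Prop :=
  Set.InjOn G.ends I ∧ (SimpleGraph.fromEdgeSet (G.ends '' I)).IsAcyclic

/-- The independence polytope `P(M(G))` of the graphic matroid of a multigraph `G`. -/
def multiIndepPolytope {V E : Type*} (G : Multigraph V E) : Set (E → ℝ) :=
  convexHull ℝ {x | ∃ I : Set E, IsMultiForest G I ∧ x = I.indicator fun _ => (1 : ℝ)}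

/-- The rank of a set of edges in the graphic matroid of a multigraph. -/
noncomputable def mrank {V E : Type*} (G : Multigraph V E) (A : Set E) : ℕ :=
  sSup {n | ∃ I ⊆ A, IsMultiForest G I ∧ I.ncard = n}

/-- A flat of the graphic matroid of a multigraph: adding any further edge increases the rank. -/
def IsGraphicFlat {V E : Type*} (G : Multigraph V E) (A : Set E) : Prop :=
  ∀ e : E, e ∉ A → mrank G (insert e A) ≠ mrank G A

/-- A circuit of the graphic matroid of a multigraph: a minimal dependent set of edges. -/
def IsMultiCircuit {V E : Type*} (G : Multigraph V E) (C : Set E) : Prop :=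
  ¬ IsMultiForest G C ∧ ∀ C' ⊂ C, IsMultiForest G C'

/-- The restriction of the graphic matroid of `G` to `A` is a connected matroid:
`A` is nonempty and any two distinct elements of `A` lie on a common circuit inside `A`. -/
def ConnectedRestriction {V E : Type*} (G : Multigraph V E) (A : Set E) : Prop :=
  A.Nonempty ∧ ∀ e ∈ A, ∀ f ∈ A, e ≠ f → ∃ C ⊆ A, IsMultiCircuit G C ∧ e ∈ C ∧ f ∈ C

/-- `G` is the `m`-blow-up of the simple graph `H`: every edge of `H` is replaced by exactly
`m` parallel edges and there are no other edges. -/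
def IsBlowUp {V E : Type*} (G : Multigraph V E) (m : ℕ) (H : SimpleGraph V) : Prop :=
  (∀ p ∈ H.edgeSet, {e : E | G.ends e = p}.ncard = m) ∧
  ∀ p : Sym2 V, p ∉ H.edgeSet → {e : E | G.ends e = p} = ∅

/-- The condition `(♣)_δ`: `(δ-1)|E(S)| + 1 = δ(|S|-1)` for every vertex subset `S` inducing a
`2`-connected subgraph. -/
def ClubCond {V : Type*} (H : SimpleGraph V) (δ : ℕ) : Prop :=
  ∀ S : Set V, IsTwoConnected (H.induce S) →
    (δ - 1) * (edgesIn H S).ncard + 1 = δ * (S.ncard - 1)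

/-! ### Chordality, `K₄` minors, cycle attachments -/

/-- A chordless cycle: a cycle such that every edge of `G` between vertices of the cycle is an
edge of the cycle. -/
def IsChordlessCycle {V : Type*} (G : SimpleGraph V) {v : V} (c : G.Walk v v) : Prop :=
  c.IsCycle ∧ ∀ e ∈ edgesIn G {u : V | u ∈ c.support}, e ∈ c.edges

/-- `G` is `δ`-chordal: every cycle without a chord has exactly `δ + 1` edges. -/
def IsDeltaChordal {V : Type*} (G : SimpleGraph V) (δ : ℕ) : Prop :=
  ∀ (v : V) (c : G.Walk v v), IsChordlessCycle G c → c.length = δ + 1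

/-- `G` has a `K₄` minor: there are four disjoint nonempty connected branch sets pairwise
joined by an edge. -/
def HasK4Minor {V : Type*} (G : SimpleGraph V) : Prop :=
  ∃ B : Fin 4 → Set V, (∀ i, (B i).Nonempty) ∧ (∀ i, (G.induce (B i)).Connected) ∧
    (Pairwise fun i j => Disjoint (B i) (B j)) ∧
    (Pairwise fun i j => ∃ u ∈ B i, ∃ v ∈ B j, G.Adj u v)

/-- One step of attaching a new `(δ+1)`-cycle to an edge: `B` is obtained from `A` by adding
`δ - 1` new vertices forming a path of length `δ` between the endpoints of an edge of
`H[A]`, these being all new edges. -/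
def AttachStep {V : Type*} (H : SimpleGraph V) (δ : ℕ) (A B : Set V) : Prop :=
  ∃ q : Fin (δ + 1) → V, Function.Injective q ∧
    H.Adj (q 0) (q (Fin.last δ)) ∧ q 0 ∈ A ∧ q (Fin.last δ) ∈ A ∧
    (∀ i : Fin (δ + 1), i ≠ 0 → i ≠ Fin.last δ → q i ∉ A) ∧
    B = A ∪ {x | ∃ i : Fin (δ + 1), i ≠ 0 ∧ i ≠ Fin.last δ ∧ q i = x} ∧
    edgesIn H B = edgesIn H A ∪ {e | ∃ i : Fin δ, e = s(q i.castSucc, q i.succ)}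

/-- `H` can be constructed from the clique `K₂` by repeatedly attaching new `(δ+1)`-cycles to
edges of the preceding graph. -/
def ConstructibleFromK2 {V : Type*} (H : SimpleGraph V) (δ : ℕ) : Prop :=
  ∃ (k : ℕ) (S : Fin (k + 1) → Set V),
    (∃ u v : V, H.Adj u v ∧ S 0 = {u, v}) ∧
    S (Fin.last k) = Set.univ ∧
    ∀ i : Fin k, AttachStep H δ (S i.castSucc) (S i.succ)

/-! ### Gluings, subdivisions, collisions, ears -/

/-- `G` (with distinguished edge `ab`) is the gluing of the graphs `Gs i` along the edges
`es i`: the disjoint union with all the edges `es i` identified to the single edge `ab`. -/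
def IsGluing {ι : Type*} {Vf : ι → Type*} {W : Type*} (Gs : ∀ i, SimpleGraph (Vf i))
    (es : ∀ i, Sym2 (Vf i)) (G : SimpleGraph W) (a b : W) : Prop :=
  a ≠ b ∧ G.Adj a b ∧
  ∃ φ : ∀ i, Vf i → W,
    (∀ i, Function.Injective (φ i)) ∧
    (∀ x : W, ∃ i, x ∈ Set.range (φ i)) ∧
    (∀ i, Sym2.map (φ i) (es i) = s(a, b)) ∧
    (∀ i j, i ≠ j → Set.range (φ i) ∩ Set.range (φ j) = {a, b}) ∧
    ∀ x y : W, G.Adj x y ↔ ∃ i, ∃ u v, (Gs i).Adj u v ∧ φ i u = x ∧ φ i v = y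

/-- `G'` together with the path `q` is the subdivision of `G` obtained by replacing the edge
`uv` by a path of `m` edges `q 0, …, q m` through new vertices. -/
def IsSubdivisionAt {V W : Type*} (G : SimpleGraph V) (u v : V) {m : ℕ}
    (G' : SimpleGraph W) (q : Fin (m + 1) → W) : Prop :=
  ∃ φ : V → W, Function.Injective φ ∧ Function.Injective q ∧
    q 0 = φ u ∧ q (Fin.last m) = φ v ∧
    (∀ i : Fin (m + 1), i ≠ 0 → i ≠ Fin.last m → q i ∉ Set.range φ) ∧
    (∀ x : W, x ∈ Set.range φ ∨ x ∈ Set.range q) ∧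
    ∀ x y : W, G'.Adj x y ↔
      ((∃ a b : V, G.Adj a b ∧ s(a, b) ≠ s(u, v) ∧ φ a = x ∧ φ b = y) ∨
       ∃ i : Fin m, s(x, y) = s(q i.castSucc, q i.succ))

/-- `G` (with the distinguished nonadjacent pair `a b`) is the collision of `G₁` and `G₂` on
the edges `e₁, e₂`: the disjoint union with `e₁` and `e₂` identified and then deleted. -/
def IsCollision {V₁ V₂ W : Type*} (G₁ : SimpleGraph V₁) (G₂ : SimpleGraph V₂)
    (e₁ : Sym2 V₁) (e₂ : Sym2 V₂) (G : SimpleGraph W) (a b : W) : Prop :=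
  a ≠ b ∧ ¬ G.Adj a b ∧
  ∃ (φ₁ : V₁ → W) (φ₂ : V₂ → W),
    Function.Injective φ₁ ∧ Function.Injective φ₂ ∧
    Sym2.map φ₁ e₁ = s(a, b) ∧ Sym2.map φ₂ e₂ = s(a, b) ∧
    (∀ x : W, x ∈ Set.range φ₁ ∨ x ∈ Set.range φ₂) ∧
    Set.range φ₁ ∩ Set.range φ₂ = {a, b} ∧
    ∀ x y : W, G.Adj x y ↔
      ((∃ u v, G₁.Adj u v ∧ s(u, v) ≠ e₁ ∧ φ₁ u = x ∧ φ₁ v = y) ∨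
       (∃ u v, G₂.Adj u v ∧ s(u, v) ≠ e₂ ∧ φ₂ u = x ∧ φ₂ v = y))

/-- The inner vertices of an ear. -/
def earInner {V : Type*} {s : ℕ} (p : Fin (s + 1) → V) : Set V :=
  {x | ∃ i : Fin (s + 1), i ≠ 0 ∧ i ≠ Fin.last s ∧ p i = x}

/-- The edges of an ear. -/
def earEdges {V : Type*} {s : ℕ} (p : Fin (s + 1) → V) : Set (Sym2 V) :=
  {e | ∃ i : Fin s, e = s(p i.castSucc, p i.succ)}

/-- An `s`-ear of `G`: a path with `s` edges whose inner vertices have degree `2` in `G`. -/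
def IsEar {V : Type*} (G : SimpleGraph V) {s : ℕ} (p : Fin (s + 1) → V) : Prop :=
  Function.Injective p ∧ (∀ i : Fin s, G.Adj (p i.castSucc) (p i.succ)) ∧
  ∀ i : Fin (s + 1), i ≠ 0 → i ≠ Fin.last s → (G.neighborSet (p i)).ncard = 2

/-- `T` is the vertex set of an inclusion-maximal proper `2`-connected induced subgraph. -/
def IsMaxProperTwoConnected {V : Type*} (G : SimpleGraph V) (T : Set V) : Prop :=
  IsTwoConnected (G.induce T) ∧ T ≠ Set.univ ∧
  ∀ T' : Set V, T ⊆ T' → T' ≠ Set.univ → IsTwoConnected (G.induce T') → T' = T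

/-! ### `(♠)₂` and `3`-connectivity -/

/-- A `2`-connected graph satisfies the equalities `(♠)₂`:
`|E| = 2(|V|-1)` and `|E(S)| = 2|S| - 3` for every good flat `S`. -/
def Spade2 {V : Type*} (G : SimpleGraph V) : Prop :=
  IsTwoConnected G ∧ G.edgeSet.ncard = 2 * (Nat.card V - 1) ∧
  ∀ S : Set V, IsGoodFlat G S → (edgesIn G S).ncard = 2 * S.ncard - 3

/-- A graph is `3`-connected if it has more than `3` vertices and remains connected after
deletion of any two vertices. -/
def IsThreeConnected {V : Type*} (G : SimpleGraph V) : Prop :=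
  3 < Nat.card V ∧ ∀ u v : V, (G.induce {x : V | x ≠ u ∧ x ≠ v}).Connected

/-! ### Inductive constructions -/

/-- Graphs obtainable from the `δ`-cycle by gluings (Proposition `construction1`) and
`(δ-1)`-subdivisions (Proposition `construction2`). -/
inductive Obtainable (δ : ℕ) : {W : Type} → SimpleGraph W → Prop
  | cycle {W : Type} (G : SimpleGraph W) (e : G ≃g SimpleGraph.cycleGraph δ) :
      Obtainable δ G
  | glue {Vf : Fin (δ - 1) → Type} {W : Type}
      (Gs : ∀ i, SimpleGraph (Vf i)) (ws : ∀ i, Sym2 (Vf i) → ℕ) (es : ∀ i, Sym2 (Vf i))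
      (G : SimpleGraph W) (a b : W)
      (hob : ∀ i, Obtainable δ (Gs i))
      (hsp : ∀ i, SatisfiesSpade (Gs i) δ (ws i))
      (hes : ∀ i, es i ∈ (Gs i).edgeSet)
      (hwe : ∀ i, ws i (es i) = δ - 1)
      (hgl : IsGluing Gs es G a b) : Obtainable δ G
  | subdivide {V W : Type} (G : SimpleGraph V) (w : Sym2 V → ℕ) (u v : V)
      (G' : SimpleGraph W) (q : Fin (δ - 1 + 1) → W)
      (hob : Obtainable δ G) (hsp : SatisfiesSpade G δ w)
      (huv : G.Adj u v) (hw1 : w s(u, v) = 1)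
      (hsub : IsSubdivisionAt G u v G' q) : Obtainable δ G'

/-- Graphs obtainable from the clique `K₄` by a finite sequence of collisions. -/
inductive ObtainableK4 : {W : Type} → SimpleGraph W → Prop
  | k4 {W : Type} (G : SimpleGraph W) (e : G ≃g (⊤ : SimpleGraph (Fin 4))) :
      ObtainableK4 G
  | collide {V₁ V₂ W : Type} (G₁ : SimpleGraph V₁) (G₂ : SimpleGraph V₂)
      (e₁ : Sym2 V₁) (e₂ : Sym2 V₂) (G : SimpleGraph W) (a b : W)
      (h₁ : ObtainableK4 G₁) (h₂ : ObtainableK4 G₂)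
      (he₁ : e₁ ∈ G₁.edgeSet) (he₂ : e₂ ∈ G₂.edgeSet)
      (hc : IsCollision G₁ G₂ e₁ e₂ G a b) : ObtainableK4 G


/-! ### Sparse edge sets and tight vertex sets -/

section Sparse

set_option linter.unusedSectionVars false

variable {V E : Type*} [Fintype V] [DecidableEq V] [Fintype E] [DecidableEq E]

open Classical in
/-- The edges of `G` with both endpoints in `S`, as a finset. -/
noncomputable def ins (G : Multigraph V E) (S : Finset V) : Finset E :=
  Finset.univ.filter fun e => ∀ v ∈ G.ends e, v ∈ S

/-- The number of edges of `I` with both endpoints in `S`. -/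
noncomputable def cnt (G : Multigraph V E) (I : Finset E) (S : Finset V) : ℕ :=
  (I ∩ ins G S).card

/-- The counting form of independence: every nonempty vertex set `S` spans at most `|S| - 1`
edges of `I`. -/
def Sparse (G : Multigraph V E) (I : Finset E) : Prop :=
  ∀ S : Finset V, S.Nonempty → cnt G I S + 1 ≤ S.card

/-- `S` is tight for `I` if it spans exactly `|S| - 1` edges of `I`; for a forest `I` this says
that `I` restricts to a spanning tree on `S`. -/
def Tight (G : Multigraph V E) (I : Finset E) (S : Finset V) : Prop :=
  S.Nonempty ∧ cnt G I S + 1 = S.card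

variable {G : Multigraph V E} {I J : Finset E} {S T : Finset V} {e f : E}

lemma mem_ins : e ∈ ins G S ↔ ∀ v ∈ G.ends e, v ∈ S := by
  simp [ins]

lemma mem_ins_of_eq {a b : V} (h : G.ends e = s(a, b)) : e ∈ ins G S ↔ a ∈ S ∧ b ∈ S := by
  simp [mem_ins, h]

lemma exists_ends (G : Multigraph V E) (e : E) : ∃ a b, a ≠ b ∧ G.ends e = s(a, b) := by
  have h := G.loopless e
  revert h
  induction G.ends e with
  | h a b => exact fun h => ⟨a, b, by simpa using h, rfl⟩

lemma ins_inter : ins G (S ∩ T) = ins G S ∩ ins G T := by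
  ext e
  simp only [mem_ins, Finset.mem_inter]
  exact ⟨fun h => ⟨fun v hv => (h v hv).1, fun v hv => (h v hv).2⟩,
    fun h v hv => ⟨h.1 v hv, h.2 v hv⟩⟩

lemma ins_mono (h : S ⊆ T) : ins G S ⊆ ins G T := by
  intro e
  simp only [mem_ins]
  exact fun he v hv => h (he v hv)

lemma cnt_mono_left (h : I ⊆ J) : cnt G I S ≤ cnt G J S :=
  Finset.card_le_card (Finset.inter_subset_inter_right h)

lemma cnt_supermodular : cnt G I S + cnt G I T ≤ cnt G I (S ∪ T) + cnt G I (S ∩ T) := by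
  unfold cnt
  rw [← Finset.card_union_add_card_inter]
  refine Nat.add_le_add (Finset.card_le_card ?_) (Finset.card_le_card ?_)
  · refine Finset.union_subset ?_ ?_
    · exact Finset.inter_subset_inter_left (ins_mono Finset.subset_union_left)
    · exact Finset.inter_subset_inter_left (ins_mono Finset.subset_union_right)
  · rw [ins_inter]
    intro e
    simp only [Finset.mem_inter]
    tauto

lemma cnt_insert (hf : f ∉ I) :
    cnt G (insert f I) S = cnt G I S + if f ∈ ins G S then 1 else 0 := by
  unfold cnt
  split_ifs with h
  · rw [Finset.insert_inter_of_mem h, Finset.card_insert_of_notMem (by simp [hf])]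
  · rw [Finset.insert_inter_of_notMem h, add_zero]

lemma Sparse.subset (hJ : Sparse G J) (h : I ⊆ J) : Sparse G I := fun S hS =>
  (Nat.add_le_add_right (cnt_mono_left h) 1).trans (hJ S hS)

lemma two_le_card_of_mem_ins (h : e ∈ ins G S) : 2 ≤ S.card := by
  obtain ⟨a, b, hab, he⟩ := exists_ends G e
  rw [mem_ins_of_eq he] at h
  exact Finset.one_lt_card.2 ⟨a, h.1, b, h.2, hab⟩

lemma sparse_empty : Sparse G ∅ := by
  intro S hS
  simpa [cnt] using hS.card_pos

lemma sparse_singleton (e : E) : Sparse G {e} := by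
  intro S hS
  have h := cnt_insert (G := G) (S := S) (Finset.notMem_empty e)
  have h0 : cnt G ∅ S = 0 := by simp [cnt]
  rw [insert_empty_eq, h0] at h
  rw [h]
  split_ifs with h1
  · simpa using two_le_card_of_mem_ins h1
  · simpa using hS.card_pos

lemma tight_singleton (u : V) (I : Finset E) : Tight G I {u} := by
  refine ⟨by simp, ?_⟩
  have : ins G {u} = ∅ := by
    ext e
    simp only [Finset.notMem_empty, iff_false]
    intro h
    simpa using two_le_card_of_mem_ins h
  simp [cnt, this]

lemma Tight.union_inter (hI : Sparse G I) (hS : Tight G I S) (hT : Tight G I T)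
    (hne : (S ∩ T).Nonempty) : Tight G I (S ∪ T) ∧ Tight G I (S ∩ T) := by
  have h1 := hI _ hne
  have hU : (S ∪ T).Nonempty := hne.mono (Finset.inter_subset_left.trans Finset.subset_union_left)
  have h2 := hI _ hU
  have h3 := cnt_supermodular (G := G) (I := I) (S := S) (T := T)
  have h4 := Finset.card_union_add_card_inter S T
  have h5 := hS.2
  have h6 := hT.2
  exact ⟨⟨hU, by omega⟩, ⟨hne, by omega⟩⟩

/-- An edge whose addition destroys sparsity is spanned by a tight set. -/
lemma exists_tight_of_not_sparse_insert (hI : Sparse G I) (hf : f ∉ I)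
    (h : ¬ Sparse G (insert f I)) : ∃ S, Tight G I S ∧ f ∈ ins G S := by
  unfold Sparse at h
  push Not at h
  obtain ⟨S, hS, hc⟩ := h
  have := hI S hS
  rw [cnt_insert hf] at hc
  split_ifs at hc with h1
  · exact ⟨S, ⟨hS, by omega⟩, h1⟩
  · omega

lemma exists_tight_of_mem (hI : Sparse G I) (hf : f ∈ I) : ∃ S, Tight G I S ∧ f ∈ ins G S := by
  obtain ⟨a, b, hab, he⟩ := exists_ends G f
  have h1 : f ∈ ins G {a, b} := by simp [mem_ins_of_eq he]
  have h2 := hI {a, b} (by simp)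
  have h3 : 0 < cnt G I {a, b} := Finset.card_pos.2 ⟨f, Finset.mem_inter.2 ⟨hf, h1⟩⟩
  rw [Finset.card_pair hab] at h2
  exact ⟨{a, b}, ⟨by simp, by rw [Finset.card_pair hab]; omega⟩, h1⟩

/-- The exchange property: if `K ⊆ I` and `K + f` are independent, then `f` can be added to `I`,
possibly after deletion of an edge of `I ∖ K`.  The edge to delete is any edge outside `K` spanned
by the smallest tight set that spans `f`. -/
lemma sparse_exchange {K : Finset E} (hI : Sparse G I) (hKI : K ⊆ I) (hf : f ∉ I)
    (hK : Sparse G (insert f K)) :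
    Sparse G (insert f I) ∨ ∃ g ∈ I \ K, Sparse G (insert f (I.erase g)) := by
  by_contra! hcon
  obtain ⟨hn, hg⟩ := hcon
  obtain ⟨S, ⟨hS, hfS⟩, hmin⟩ := exists_minimal_of_wellFoundedLT
    (fun S => Tight G I S ∧ f ∈ ins G S) (exists_tight_of_not_sparse_insert hI hf hn)
  have hfK : f ∉ K := fun h => hf (hKI h)
  obtain ⟨g, hgI, hgK, hgS⟩ : ∃ g ∈ I, g ∉ K ∧ g ∈ ins G S := by
    by_contra! h
    have h1 : I ∩ ins G S ⊆ K ∩ ins G S := by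
      intro x hx
      rw [Finset.mem_inter] at hx ⊢
      exact ⟨by_contra fun hxK => h x hx.1 hxK hx.2, hx.2⟩
    have h2 := Finset.card_le_card h1
    have h3 := hK S hS.1
    rw [cnt_insert hfK, if_pos hfS] at h3
    have h4 := hS.2
    unfold cnt at h3 h4
    omega
  have hIg : Sparse G (I.erase g) := hI.subset (Finset.erase_subset g I)
  obtain ⟨T, hT, hfT⟩ := exists_tight_of_not_sparse_insert hIg
    (fun h => hf (Finset.mem_of_mem_erase h)) (hg g (Finset.mem_sdiff.2 ⟨hgI, hgK⟩))
  have hle : cnt G (I.erase g) T ≤ cnt G I T := cnt_mono_left (Finset.erase_subset g I)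
  have hTI : Tight G I T := by
    have h1 := hI T hT.1
    have h2 := hT.2
    exact ⟨hT.1, by omega⟩
  have hgT : g ∉ ins G T := by
    intro h
    have h1 : I.erase g ∩ ins G T ⊂ I ∩ ins G T := by
      rw [Finset.ssubset_iff_of_subset
        (Finset.inter_subset_inter_right (Finset.erase_subset g I))]
      exact ⟨g, Finset.mem_inter.2 ⟨hgI, h⟩, by simp⟩
    have h2 := Finset.card_lt_card h1
    have h3 := hT.2
    have h4 := hTI.2
    unfold cnt at h3 h4
    omega
  have hST : f ∈ ins G (S ∩ T) := by
    rw [ins_inter]; exact Finset.mem_inter.2 ⟨hfS, hfT⟩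
  have hne : (S ∩ T).Nonempty := Finset.card_pos.1 (by
    have := two_le_card_of_mem_ins hST; omega)
  have hti := (hS.union_inter hI hTI hne).2
  have := hmin ⟨hti, hST⟩ Finset.inter_subset_left
  exact hgT (ins_mono (Finset.Subset.trans this Finset.inter_subset_right) hgS)

/-- If every edge of `I` inside `S` lies inside `P` or inside `Q`, the counts for `P` and `Q`
bound the count for `S`. -/
lemma cnt_le_add_of_split {P Q : Finset V} (h : ∀ e ∈ I, e ∈ ins G S → e ∈ ins G P ∨ e ∈ ins G Q) :
    cnt G I S ≤ cnt G I P + cnt G I Q := by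
  unfold cnt
  refine le_trans (Finset.card_le_card ?_) (Finset.card_union_le _ _)
  intro e he
  rw [Finset.mem_inter] at he
  rw [Finset.mem_union, Finset.mem_inter, Finset.mem_inter]
  have := h e he.1 he.2
  tauto

/-- If every edge of `A` is spanned by some set that is tight for `I ⊆ A`, then a vertex set `C`
closed under `A`-adjacency, minimal among those containing `u`, is tight for `I`. -/
lemma tight_of_closed {A : Finset E} {C : Finset V} {u : V} (hI : Sparse G I) (hIA : I ⊆ A)
    (hA : ∀ f ∈ A, ∃ T, Tight G I T ∧ f ∈ ins G T) (hu : u ∈ C)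
    (hC : ∀ f ∈ A, ∀ a b, G.ends f = s(a, b) → a ∈ C → b ∈ C)
    (hmin : ∀ D : Finset V, u ∈ D → (∀ f ∈ A, ∀ a b, G.ends f = s(a, b) → a ∈ D → b ∈ D) →
      C ⊆ D) : Tight G I C := by
  obtain ⟨S, ⟨hS, huS⟩, hmax⟩ := exists_maximal_of_wellFoundedGT
    (fun S => Tight G I S ∧ u ∈ S) ⟨{u}, tight_singleton u I, by simp⟩
  have hCS : C ⊆ S := by
    refine hmin S huS fun f hf a b hab ha => ?_
    obtain ⟨T, hT, hfT⟩ := hA f hf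
    rw [mem_ins_of_eq hab] at hfT
    have h1 := (hS.union_inter hI hT ⟨a, Finset.mem_inter.2 ⟨ha, hfT.1⟩⟩).1
    have h2 := hmax ⟨h1, Finset.mem_union_left _ huS⟩ Finset.subset_union_left
    exact h2 (Finset.mem_union_right _ hfT.2)
  have hSC : S ⊆ C := by
    by_contra hne
    have hne' : (S \ C).Nonempty := Finset.sdiff_nonempty.2 hne
    have h1 := hI _ hne'
    have h2 := hI C ⟨u, hu⟩
    have h3 : cnt G I S ≤ cnt G I C + cnt G I (S \ C) := by
      refine cnt_le_add_of_split fun e he heS => ?_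
      obtain ⟨a, b, -, hab⟩ := exists_ends G e
      have hba : G.ends e = s(b, a) := by rw [hab, Sym2.eq_swap]
      have hab' := hC e (hIA he) a b hab
      have hba' := hC e (hIA he) b a hba
      rw [mem_ins_of_eq hab] at heS ⊢
      rw [mem_ins_of_eq hab, Finset.mem_sdiff, Finset.mem_sdiff]
      tauto
    have h4 := hS.2
    have h5 := Finset.card_sdiff_add_card_eq_card hCS
    omega
  rwa [Finset.Subset.antisymm hCS hSC]

lemma exists_min_closed (G : Multigraph V E) (A : Finset E) (u : V) : ∃ C : Finset V, u ∈ C ∧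
    (∀ f ∈ A, ∀ a b, G.ends f = s(a, b) → a ∈ C → b ∈ C) ∧
    ∀ D : Finset V, u ∈ D → (∀ f ∈ A, ∀ a b, G.ends f = s(a, b) → a ∈ D → b ∈ D) →
      C ⊆ D := by
  obtain ⟨C, ⟨hu, hC⟩, hmin⟩ := exists_minimal_of_wellFoundedLT
    (fun C : Finset V => u ∈ C ∧ ∀ f ∈ A, ∀ a b, G.ends f = s(a, b) → a ∈ C → b ∈ C)
    ⟨Finset.univ, by simp, by simp⟩
  refine ⟨C, hu, hC, fun D huD hD => ?_⟩
  have := hmin (y := C ∩ D) ⟨Finset.mem_inter.2 ⟨hu, huD⟩, fun f hf a b hab ha => ?_⟩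
    Finset.inter_subset_left
  · exact Finset.Subset.trans this Finset.inter_subset_right
  · rw [Finset.mem_inter] at ha ⊢
    exact ⟨hC f hf a b hab ha.1, hD f hf a b hab ha.2⟩

/-- Every edge of maximum weight is spanned by a tight set of the heavy part `I ∩ {w = M}` of a
maximum-weight independent set `I`. -/
lemma heavy_tight {w : E → ℝ} {M : ℝ} {A : Finset E} (hI : Sparse G I)
    (hmax : ∀ J, Sparse G J → ∑ e ∈ J, w e ≤ ∑ e ∈ I, w e) (hM : 0 < M) (hw : ∀ e, w e ≤ M)
    (hA : ∀ e, e ∈ A ↔ w e = M) (hf : f ∈ A) :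
    ∃ T, Tight G (I ∩ A) T ∧ f ∈ ins G T := by
  have hIA : Sparse G (I ∩ A) := hI.subset Finset.inter_subset_left
  by_cases hfI : f ∈ I
  · exact exists_tight_of_mem hIA (Finset.mem_inter.2 ⟨hfI, hf⟩)
  refine exists_tight_of_not_sparse_insert hIA (fun h => hfI (Finset.mem_inter.1 h).1) fun h => ?_
  have hwf := (hA f).1 hf
  rcases sparse_exchange hI Finset.inter_subset_left hfI h with h1 | ⟨g, hg, h1⟩
  · have h2 := hmax _ h1
    rw [Finset.sum_insert hfI] at h2
    linarith
  · have h2 := hmax _ h1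
    rw [Finset.sum_insert (fun h => hfI (Finset.mem_of_mem_erase h))] at h2
    have hgI : g ∈ I := (Finset.mem_sdiff.1 hg).1
    have h3 := Finset.add_sum_erase I w hgI
    have h4 : w g ≠ M := fun h => (Finset.mem_sdiff.1 hg).2
      (Finset.mem_inter.2 ⟨hgI, (hA g).2 h⟩)
    have h5 := lt_of_le_of_ne (hw g) h4
    linarith

/-- No cut of `R` into two nonempty parts is avoided by the edges of `G`: connectivity of the
subgraph spanned by `R` (apart from the case `R = ∅`). -/
def Crossed (G : Multigraph V E) (R : Finset V) : Prop :=
  ∀ P Q : Finset V, P.Nonempty → Q.Nonempty → Disjoint P Q → P ∪ Q = R →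
    ∃ e, ∃ a ∈ P, ∃ b ∈ Q, G.ends e = s(a, b)

/-- `2`-connectivity of the subgraph spanned by `S`, expressed through cuts. -/
def CutTC (G : Multigraph V E) (S : Finset V) : Prop :=
  2 ≤ S.card ∧ Crossed G S ∧ ∀ x ∈ S, Crossed G (S.erase x)

lemma mem_ins_or_of_not_crossed {P Q : Finset V}
    (h : ¬ ∃ e, ∃ a ∈ P, ∃ b ∈ Q, G.ends e = s(a, b)) (he : e ∈ ins G (P ∪ Q)) :
    e ∈ ins G P ∨ e ∈ ins G Q := by
  push Not at h
  obtain ⟨a, b, -, hab⟩ := exists_ends G e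
  have hba : G.ends e = s(b, a) := by rw [hab, Sym2.eq_swap]
  rw [mem_ins_of_eq hab, Finset.mem_union, Finset.mem_union] at he
  rw [mem_ins_of_eq hab, mem_ins_of_eq hab]
  have h1 := fun ha hb => h e a ha b hb hab
  have h2 := fun hb ha => h e b hb a ha hba
  tauto

/-- A smallest vertex set with at least two elements that is tight for all members of a nonempty
family of independent sets is `2`-connected: a cut or a cut vertex would split off a smaller
one. -/
lemma cutTC_of_minimal {F : Set (Finset E)} (hF : F.Nonempty) (hsp : ∀ I ∈ F, Sparse G I)
    (hS : 2 ≤ S.card) (ht : ∀ I ∈ F, Tight G I S)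
    (hmin : ∀ T : Finset V, 2 ≤ T.card → (∀ I ∈ F, Tight G I T) → ¬ T.card < S.card) :
    CutTC G S := by
  refine ⟨hS, ?_, ?_⟩
  · rintro P Q hP hQ hd rfl
    by_contra hno
    obtain ⟨I, hI⟩ := hF
    have h1 := hsp I hI P hP
    have h2 := hsp I hI Q hQ
    have h3 : cnt G I (P ∪ Q) ≤ cnt G I P + cnt G I Q :=
      cnt_le_add_of_split fun e _ he => mem_ins_or_of_not_crossed hno he
    have h4 := (ht I hI).2
    rw [Finset.card_union_of_disjoint hd] at h4
    omega
  · intro x hx P Q hP hQ hd hPQ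
    by_contra hno
    have hxPQ : x ∉ P ∪ Q := by rw [hPQ]; simp
    rw [Finset.mem_union, not_or] at hxPQ
    have hc := congrArg Finset.card hPQ
    rw [Finset.card_union_of_disjoint hd, Finset.card_erase_of_mem hx] at hc
    have hP1 := hP.card_pos
    have hQ1 := hQ.card_pos
    -- `x` is a cut vertex between `P` and `Q`, and `P + x` inherits tightness from `S`.
    have hcP := Finset.card_insert_of_notMem hxPQ.1
    have hcQ := Finset.card_insert_of_notMem hxPQ.2
    refine hmin (insert x P) (by omega) (fun I hI => ⟨by simp, ?_⟩) (by omega)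
    have h1 := hsp I hI (insert x P) (by simp)
    have h2 := hsp I hI (insert x Q) (by simp)
    have h3 : cnt G I S ≤ cnt G I (insert x P) + cnt G I (insert x Q) := by
      refine cnt_le_add_of_split fun e _ he => ?_
      obtain ⟨a, b, -, hab⟩ := exists_ends G e
      have hba : G.ends e = s(b, a) := by rw [hab, Sym2.eq_swap]
      push Not at hno
      have h1 := fun ha hb => hno e a ha b hb hab
      have h2 := fun hb ha => hno e b hb a ha hba
      have hm : ∀ y, y ∈ S → y = x ∨ y ∈ P ∨ y ∈ Q := by
        intro y hy
        by_cases hyx : y = x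
        · exact Or.inl hyx
        · right
          rw [← Finset.mem_union, hPQ]
          exact Finset.mem_erase.2 ⟨hyx, hy⟩
      rw [mem_ins_of_eq hab] at he
      have ha := hm a he.1
      have hb := hm b he.2
      rw [mem_ins_of_eq hab, mem_ins_of_eq hab]
      simp only [Finset.mem_insert]
      tauto
    have h4 := (ht I hI).2
    omega

/-- All maximum-weight independent sets restrict to spanning trees on a common `2`-connected
vertex set, as soon as the weight is positive somewhere. -/
lemma exists_common_tight {w : E → ℝ} {F : Set (Finset E)} (hF : F.Nonempty)
    (hsp : ∀ I ∈ F, Sparse G I) (hmax : ∀ I ∈ F, ∀ J, Sparse G J → ∑ e ∈ J, w e ≤ ∑ e ∈ I, w e)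
    (hpos : ∃ e, 0 < w e) : ∃ S, CutTC G S ∧ ∀ I ∈ F, Tight G I S := by
  obtain ⟨e₀, he₀⟩ := hpos
  obtain ⟨e₁, -, he₁⟩ := Finset.exists_max_image Finset.univ w ⟨e₀, Finset.mem_univ _⟩
  have hM : 0 < w e₁ := he₀.trans_le (he₁ e₀ (Finset.mem_univ _))
  let A : Finset E := Finset.univ.filter fun e => w e = w e₁
  have hA : ∀ e, e ∈ A ↔ w e = w e₁ := by simp [A]
  obtain ⟨u, v, huv, he⟩ := exists_ends G e₁
  -- `C` is the vertex set of the component of `u` in the graph formed by the heaviest edges.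
  obtain ⟨C, huC, hC, hCmin⟩ := exists_min_closed G A u
  have hvC : v ∈ C := hC e₁ ((hA _).2 rfl) u v he huC
  have hCt : ∀ I ∈ F, Tight G I C := by
    intro I hI
    have h1 := tight_of_closed ((hsp I hI).subset Finset.inter_subset_left)
      Finset.inter_subset_right
      (fun f hf => heavy_tight (hsp I hI) (hmax I hI) hM (fun e => he₁ e (Finset.mem_univ _))
        hA hf) huC hC hCmin
    have h2 := hsp I hI C h1.1
    have h3 : cnt G (I ∩ A) C ≤ cnt G I C := cnt_mono_left Finset.inter_subset_left
    have h4 := h1.2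
    exact ⟨h1.1, by omega⟩
  obtain ⟨S, ⟨hS2, hS⟩, hmin⟩ := WellFounded.has_min (measure Finset.card).wf
    {S : Finset V | 2 ≤ S.card ∧ ∀ I ∈ F, Tight G I S}
    ⟨C, Finset.one_lt_card.2 ⟨u, huC, v, hvC, huv⟩, hCt⟩
  exact ⟨S, cutTC_of_minimal hF hsp hS2 hS fun T h1 h2 => hmin T ⟨h1, h2⟩, hS⟩

/-- A connected vertex set has a spanning tree. -/
lemma exists_tight_of_crossed {R : Finset V} (hR : R.Nonempty) (hc : Crossed G R) :
    ∃ I, Sparse G I ∧ I ⊆ ins G R ∧ Tight G I R := by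
  obtain ⟨I, ⟨hI, hIR⟩, hmax⟩ := exists_maximal_of_wellFoundedGT
    (fun I => Sparse G I ∧ I ⊆ ins G R) ⟨∅, sparse_empty, by simp⟩
  refine ⟨I, hI, hIR, ?_⟩
  have hcov : ∀ f ∈ ins G R, ∃ T, Tight G I T ∧ f ∈ ins G T := by
    intro f hf
    by_cases hfI : f ∈ I
    · exact exists_tight_of_mem hI hfI
    · refine exists_tight_of_not_sparse_insert hI hfI fun h => hfI ?_
      exact hmax ⟨h, Finset.insert_subset hf hIR⟩ (Finset.subset_insert f I)
        (Finset.mem_insert_self f I)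
  obtain ⟨u, hu⟩ := hR
  refine tight_of_closed hI hIR hcov hu (fun f hf a b hab _ => ?_) fun D huD hD x hx => ?_
  · exact ((mem_ins_of_eq hab).1 hf).2
  · by_contra hxD
    obtain ⟨e, a, ha, b, hb, hab⟩ := hc (R ∩ D) (R \ D) ⟨u, by simp [hu, huD]⟩
      ⟨x, by simp [hx, hxD]⟩ (Finset.disjoint_left.2 fun y h1 h2 =>
        (Finset.mem_sdiff.1 h2).2 (Finset.mem_inter.1 h1).2)
      (by ext y; simp only [Finset.mem_union, Finset.mem_inter, Finset.mem_sdiff]; tauto)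
    rw [Finset.mem_inter] at ha
    rw [Finset.mem_sdiff] at hb
    exact hb.2 (hD e ((mem_ins_of_eq hab).2 ⟨ha.1, hb.1⟩) a b hab ha.2)

/-- Adding a pendant edge to a spanning tree of `S - v` gives a spanning tree of `S`. -/
lemma tight_insert_pendant {v a : V} (hI : Sparse G I) (hIS : I ⊆ ins G (S.erase v))
    (ht : Tight G I (S.erase v)) (hv : v ∈ S) (ha : a ∈ S) (he : G.ends e = s(v, a)) :
    Sparse G (insert e I) ∧ insert e I ⊆ ins G S ∧ Tight G (insert e I) S := by
  have hva : v ≠ a := by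
    have := G.loopless e
    rw [he] at this
    simpa using this
  have heI : e ∉ I := fun h => by
    have := (mem_ins_of_eq he).1 (hIS h)
    simp at this
  have herase : ∀ T, cnt G I T = cnt G I (T.erase v) := by
    intro T
    unfold cnt
    congr 1
    ext f
    simp only [Finset.mem_inter, mem_ins]
    refine ⟨fun h => ⟨h.1, fun x hx => Finset.mem_erase.2 ⟨?_, h.2 x hx⟩⟩,
      fun h => ⟨h.1, fun x hx => Finset.mem_of_mem_erase (h.2 x hx)⟩⟩
    exact (Finset.mem_erase.1 (mem_ins.1 (hIS h.1) x hx)).1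
  have heS : e ∈ ins G S := (mem_ins_of_eq he).2 ⟨hv, ha⟩
  refine ⟨fun T hT => ?_, ?_, ⟨v, hv⟩, ?_⟩
  · rw [cnt_insert heI]
    split_ifs with h
    · rw [mem_ins_of_eq he] at h
      have h1 := hI (T.erase v) ⟨a, Finset.mem_erase.2 ⟨hva.symm, h.2⟩⟩
      have h2 := Finset.card_erase_add_one h.1
      rw [herase]
      omega
    · simpa using hI T hT
  · exact Finset.insert_subset heS (hIS.trans (ins_mono (Finset.erase_subset v S)))
  · rw [cnt_insert heI, if_pos heS, herase, ← Finset.card_erase_add_one hv, ← ht.2]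

/-- An edge that does not lie inside `S` can be added to an independent set inside `S`. -/
lemma sparse_insert_of_notMem_ins (hI : Sparse G I) (hIS : I ⊆ ins G S) (he : e ∉ ins G S) :
    Sparse G (insert e I) := by
  intro T hT
  rw [cnt_insert fun h => he (hIS h)]
  split_ifs with h
  · have h2 := two_le_card_of_mem_ins h
    have h1 : cnt G I T = cnt G I (T ∩ S) := by
      unfold cnt
      congr 1
      ext f
      rw [ins_inter]
      simp only [Finset.mem_inter]
      have := @hIS f
      tauto
    rw [h1]
    rcases (T ∩ S).eq_empty_or_nonempty with h0 | h0
    · have : cnt G I (∅ : Finset V) = 0 := by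
        rw [cnt, Finset.card_eq_zero, Finset.eq_empty_iff_forall_notMem]
        intro f hf
        simpa using two_le_card_of_mem_ins (Finset.mem_inter.1 hf).2
      rw [h0, this]
      omega
    · have h3 := hI _ h0
      have h4 : (T ∩ S).card < T.card := by
        refine Finset.card_lt_card (Finset.ssubset_iff_subset_ne.2
          ⟨Finset.inter_subset_left, fun h5 => he ?_⟩)
        rw [← h5] at h
        exact ins_mono Finset.inter_subset_right h
      omega
  · simpa using hI T hT

end Sparse

/-! ### Forests and `2`-connectivity in terms of counting -/

section Graphs

set_option linter.unusedSectionVars false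

variable {V E : Type*} [Fintype V] [DecidableEq V] [Fintype E] [DecidableEq E]
  {G : Multigraph V E}

/-- A forest spans at most `|S| - 1` edges inside a nonempty `S`: its restriction to `S` extends
to a tree on `S`. -/
lemma sparse_of_forest {I : Finset E} (h : IsMultiForest G (I : Set E)) : Sparse G I := by
  classical
  intro S hS
  obtain ⟨hinj, hac⟩ := h
  have hne : Nonempty (S : Set V) := hS.to_subtype
  obtain ⟨T, hT, hTt⟩ :=
    (SimpleGraph.connected_top (V := (S : Set V))).exists_isTree_le_of_le_of_isAcyclic
      le_top (hac.induce (S : Set V))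
  have hc := hTt.2.card_edgeFinset
  have h1 : (I ∩ ins G S).image G.ends ⊆ T.edgeFinset.image (Sym2.map Subtype.val) := by
    intro p hp
    obtain ⟨e, he, rfl⟩ := Finset.mem_image.1 hp
    rw [Finset.mem_inter] at he
    obtain ⟨a, b, hab, hE⟩ := exists_ends G e
    have h2 := (mem_ins_of_eq hE).1 he.2
    refine Finset.mem_image.2 ⟨s(⟨a, h2.1⟩, ⟨b, h2.2⟩), ?_, by simp [hE]⟩
    rw [SimpleGraph.mem_edgeFinset, SimpleGraph.mem_edgeSet]
    refine hT ?_
    rw [SimpleGraph.comap_adj, SimpleGraph.fromEdgeSet_adj]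
    exact ⟨⟨e, he.1, hE⟩, hab⟩
  have h2 := (Finset.card_le_card h1).trans Finset.card_image_le
  rw [Finset.card_image_of_injOn (hinj.mono fun e he => (Finset.mem_inter.1 he).1)] at h2
  have h3 : Fintype.card (S : Set V) = S.card := by simp
  unfold cnt
  omega

/-- The vertex set of a cycle, or of a pair of parallel edges, violates sparsity. -/
lemma forest_of_sparse {I : Finset E} (h : Sparse G I) : IsMultiForest G (I : Set E) := by
  classical
  refine ⟨fun e he f hf hef => ?_, fun v c hc => ?_⟩
  · by_contra hne
    obtain ⟨a, b, hab, hE⟩ := exists_ends G e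
    have h1 := h {a, b} (by simp)
    have h2 : ({e, f} : Finset E) ⊆ I ∩ ins G {a, b} := by
      intro x hx
      rw [Finset.mem_insert, Finset.mem_singleton] at hx
      rcases hx with rfl | rfl
      · exact Finset.mem_inter.2 ⟨he, (mem_ins_of_eq hE).2 (by simp)⟩
      · exact Finset.mem_inter.2 ⟨hf, (mem_ins_of_eq (hef ▸ hE)).2 (by simp)⟩
    have h3 := Finset.card_le_card h2
    rw [Finset.card_pair hab] at h1
    rw [Finset.card_pair hne] at h3
    unfold cnt at h1
    omega
  · have h1 := h c.support.toFinset ⟨v, by simp⟩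
    have h2 : c.support.toFinset.card ≤ c.length := by
      have h3 : c.support.toFinset ⊆ c.support.tail.toFinset := by
        intro x hx
        rw [List.mem_toFinset] at hx ⊢
        rcases SimpleGraph.Walk.mem_support_iff c |>.1 hx with rfl | hx
        · exact c.end_mem_tail_support hc.not_nil
        · exact hx
      refine (Finset.card_le_card h3).trans ((List.toFinset_card_le _).trans ?_)
      simp
    have h3 : c.edges.toFinset ⊆ (I ∩ ins G c.support.toFinset).image G.ends := by
      intro p hp
      rw [List.mem_toFinset] at hp
      have h4 := c.edges_subset_edgeSet hp
      rw [SimpleGraph.edgeSet_fromEdgeSet] at h4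
      obtain ⟨e, he, rfl⟩ := h4.1
      refine Finset.mem_image.2 ⟨e, Finset.mem_inter.2 ⟨he, mem_ins.2 fun x hx => ?_⟩, rfl⟩
      rw [List.mem_toFinset]
      exact SimpleGraph.Walk.mem_support_of_mem_edges hp hx
    have h4 := (Finset.card_le_card h3).trans Finset.card_image_le
    rw [List.toFinset_card_of_nodup hc.edges_nodup, SimpleGraph.Walk.length_edges] at h4
    unfold cnt at h1
    omega

lemma forest_iff_sparse {I : Finset E} : IsMultiForest G (I : Set E) ↔ Sparse G I :=
  ⟨sparse_of_forest, forest_of_sparse⟩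

lemma connected_induce_iff {H : SimpleGraph V}
    (hH : ∀ a b, H.Adj a b ↔ ∃ e, G.ends e = s(a, b)) (R : Finset V) :
    (H.induce (R : Set V)).Connected ↔ R.Nonempty ∧ Crossed G R := by
  classical
  constructor
  · intro h
    refine ⟨by obtain ⟨x⟩ := h.nonempty; exact ⟨x.1, x.2⟩, ?_⟩
    rintro P Q ⟨p, hp⟩ ⟨q, hq⟩ hd rfl
    obtain ⟨w⟩ := h.preconnected ⟨p, by simp [hp]⟩ ⟨q, by simp [hq]⟩
    obtain ⟨d, -, hd1, hd2⟩ := w.exists_boundary_dart {x | x.1 ∈ P} hp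
      (fun hqP => Finset.disjoint_left.1 hd hqP hq)
    have hadj := d.adj
    rw [SimpleGraph.comap_adj] at hadj
    obtain ⟨e, he⟩ := (hH _ _).1 hadj
    refine ⟨e, _, hd1, _, ?_, he⟩
    have h1 := d.snd.2
    simp only [Finset.coe_union, Set.mem_union, Finset.mem_coe] at h1
    exact h1.resolve_left hd2
  · rintro ⟨⟨u, hu⟩, hc⟩
    rw [SimpleGraph.connected_iff_exists_forall_reachable]
    refine ⟨⟨u, hu⟩, fun ⟨x, hx⟩ => ?_⟩
    by_contra hno
    let P : Finset V := R.filter fun y =>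
      ∃ hy : y ∈ R, (H.induce (R : Set V)).Reachable ⟨u, hu⟩ ⟨y, hy⟩
    have hmem : ∀ y (hy : y ∈ R),
        y ∈ P ↔ (H.induce (R : Set V)).Reachable ⟨u, hu⟩ ⟨y, hy⟩ := by
      intro y hy
      simp only [P, Finset.mem_filter]
      exact ⟨fun h => h.2.2, fun h => ⟨hy, hy, h⟩⟩
    obtain ⟨e, a, ha, b, hb, he⟩ := hc P (R \ P) ⟨u, (hmem u hu).2 (SimpleGraph.Reachable.refl _)⟩
      ⟨x, Finset.mem_sdiff.2 ⟨hx, fun h => hno ((hmem x hx).1 h)⟩⟩ Finset.disjoint_sdiff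
      (Finset.union_sdiff_of_subset (Finset.filter_subset _ _))
    have haR : a ∈ R := (Finset.mem_filter.1 ha).1
    rw [Finset.mem_sdiff] at hb
    have hadj : (H.induce (R : Set V)).Adj ⟨a, haR⟩ ⟨b, hb.1⟩ := by
      rw [SimpleGraph.comap_adj]
      exact (hH a b).2 ⟨e, he⟩
    exact hb.2 ((hmem b hb.1).2 (((hmem a haR).1 ha).trans hadj.reachable))

/-- Deleting a vertex from an induced subgraph. -/
def induceEraseIso (H : SimpleGraph V) (S : Finset V) (v : (S : Set V)) :
    (H.induce (S : Set V)).induce {u | u ≠ v} ≃g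
      H.induce ((S.erase v.1 : Finset V) : Set V) where
  toFun u := ⟨u.1.1, Finset.mem_coe.2 (Finset.mem_erase.2 ⟨fun h => u.2 (Subtype.ext h), u.1.2⟩)⟩
  invFun u := ⟨⟨u.1, Finset.mem_coe.2 (Finset.mem_erase.1 u.2).2⟩, fun h =>
    (Finset.mem_erase.1 u.2).1 (congrArg Subtype.val h)⟩
  left_inv _ := rfl
  right_inv _ := rfl
  map_rel_iff' := Iff.rfl

lemma isTwoConnected_iff {H : SimpleGraph V}
    (hH : ∀ a b, H.Adj a b ↔ ∃ e, G.ends e = s(a, b)) (S : Finset V) :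
    IsTwoConnected (H.induce (S : Set V)) ↔ CutTC G S := by
  unfold IsTwoConnected CutTC
  rw [connected_induce_iff hH]
  have h1 : (∀ v : (S : Set V), ((H.induce (S : Set V)).induce {u | u ≠ v}).Connected) ↔
      ∀ x ∈ S, (S.erase x).Nonempty ∧ Crossed G (S.erase x) := by
    constructor
    · intro h x hx
      rw [← connected_induce_iff hH, ← (induceEraseIso H S ⟨x, hx⟩).connected_iff]
      exact h ⟨x, hx⟩
    · intro h v
      rw [(induceEraseIso H S v).connected_iff, connected_induce_iff hH]
      exact h v.1 v.2
  rw [h1]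
  constructor
  · rintro ⟨⟨⟨x, hx⟩, h2⟩, h3⟩
    refine ⟨?_, h2, fun x hx => (h3 x hx).2⟩
    have h4 := (h3 x hx).1.card_pos
    rw [Finset.card_erase_of_mem hx] at h4
    omega
  · rintro ⟨h2, h3, h4⟩
    refine ⟨⟨Finset.card_pos.1 (by omega), h3⟩, fun x hx => ⟨Finset.card_pos.1 ?_, h4 x hx⟩⟩
    rw [Finset.card_erase_of_mem hx]
    omega

/-- The two endpoints of an edge span a `2`-connected subgraph. -/
lemma cutTC_pair {e : E} {a b : V} (hab : a ≠ b) (he : G.ends e = s(a, b)) :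
    CutTC G {a, b} := by
  refine ⟨(Finset.card_pair hab).ge, ?_, ?_⟩
  · intro P Q hP hQ hd hPQ
    have ha : a ∈ P ∪ Q := by simp [hPQ]
    have hb : b ∈ P ∪ Q := by simp [hPQ]
    have hx : ∀ x ∈ P ∪ Q, x = a ∨ x = b := by simp [hPQ]
    obtain ⟨p, hp⟩ := hP
    obtain ⟨q, hq⟩ := hQ
    have hpq : p ≠ q := fun h => Finset.disjoint_left.1 hd hp (h ▸ hq)
    have hba : G.ends e = s(b, a) := by rw [he, Sym2.eq_swap]
    rcases hx p (Finset.mem_union_left _ hp) with rfl | rfl <;>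
    rcases hx q (Finset.mem_union_right _ hq) with rfl | rfl
    · exact absurd rfl hpq
    · exact ⟨e, _, hp, _, hq, he⟩
    · exact ⟨e, _, hp, _, hq, hba⟩
    · exact absurd rfl hpq
  · intro x hx P Q hP hQ hd hPQ
    have h1 := Finset.card_union_of_disjoint hd
    rw [hPQ, Finset.card_erase_of_mem hx, Finset.card_pair hab] at h1
    have := hP.card_pos
    have := hQ.card_pos
    omega

/-- Every vertex of a `2`-connected set is incident to an edge inside the set. -/
lemma CutTC.exists_edge {S : Finset V} (h : CutTC G S) {v : V} (hv : v ∈ S) :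
    ∃ e, ∃ a ∈ S, G.ends e = s(v, a) := by
  have h1 : 0 < (S.erase v).card := by
    rw [Finset.card_erase_of_mem hv]
    have := h.1
    omega
  obtain ⟨e, a, ha, b, hb, he⟩ := h.2.1 {v} (S.erase v) (by simp) (Finset.card_pos.1 h1) (by simp)
    (by rw [← Finset.insert_eq, Finset.insert_erase hv])
  rw [Finset.mem_singleton] at ha
  subst ha
  exact ⟨e, b, Finset.mem_of_mem_erase hb, he⟩

end Graphs

/-! ### Linear algebra of facets -/

section Linear

/-- If a nonzero form `h` vanishes on `Z`, then `Z` spans a hyperplane exactly when every form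
vanishing on `Z` is a multiple of `h`. -/
lemma finrank_span_add_one_iff {W : Type*} [AddCommGroup W] [Module ℝ W] [FiniteDimensional ℝ W]
    {Z : Set W} {h : W →ₗ[ℝ] ℝ} (h0 : h ≠ 0) (hZ : ∀ z ∈ Z, h z = 0) :
    Module.finrank ℝ (Submodule.span ℝ Z) + 1 = Module.finrank ℝ W ↔
      ∀ k : W →ₗ[ℝ] ℝ, (∀ z ∈ Z, k z = 0) → ∃ c : ℝ, k = c • h := by
  have hker : Module.finrank ℝ (LinearMap.ker h) + 1 = Module.finrank ℝ W :=
    Module.Dual.finrank_ker_add_one_of_ne_zero h0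
  have hle : Submodule.span ℝ Z ≤ LinearMap.ker h := Submodule.span_le.2 fun z hz => hZ z hz
  constructor
  · intro hf k hk
    have heq : Submodule.span ℝ Z = LinearMap.ker h :=
      Submodule.eq_of_le_of_finrank_eq hle (by omega)
    have hkk : LinearMap.ker h ≤ LinearMap.ker k := by
      rw [← heq]
      exact Submodule.span_le.2 fun z hz => hk z hz
    obtain ⟨x, hx⟩ := LinearMap.surjective h0 1
    refine ⟨k x, LinearMap.ext fun y => ?_⟩
    have h1 : y - h y • x ∈ LinearMap.ker h := by simp [hx]
    have h2 := hkk h1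
    rw [LinearMap.mem_ker, map_sub, map_smul, smul_eq_mul, sub_eq_zero] at h2
    simp [h2, mul_comm]
  · intro hk
    have heq : Submodule.span ℝ Z = LinearMap.ker h := by
      refine le_antisymm hle fun x hx => ?_
      by_contra hxZ
      obtain ⟨f, hfx, hf⟩ := Submodule.exists_le_ker_of_notMem hxZ
      obtain ⟨c, rfl⟩ := hk f fun z hz => hf (Submodule.subset_span hz)
      refine hfx ?_
      rw [LinearMap.mem_ker] at hx
      simp [hx]
    rw [heq, hker]

/-- If all facet forms of a finitely generated full-dimensional cone are nonnegative at `p`, then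
so is every form that is nonnegative on the cone.  Given a form `h` that is negative at `p` and
is not a facet form, some nonzero `g` vanishes at `p` and at all generators where `h` vanishes;
moving from `h` in direction `g` until a further generator is killed keeps the value at `p`. -/
lemma nonneg_of_facets_nonneg {W ι : Type*} [AddCommGroup W] [Module ℝ W] [Fintype ι]
    (X : ι → W) (hspan : ∀ k : W →ₗ[ℝ] ℝ, (∀ i, k (X i) = 0) → k = 0) (p : W)
    (hp : ∀ h : W →ₗ[ℝ] ℝ, h ≠ 0 → (∀ i, 0 ≤ h (X i)) →
      (∀ k : W →ₗ[ℝ] ℝ, (∀ i, h (X i) = 0 → k (X i) = 0) → ∃ c : ℝ, k = c • h) → 0 ≤ h p)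
    (h : W →ₗ[ℝ] ℝ) (hX : ∀ i, 0 ≤ h (X i)) : 0 ≤ h p := by
  classical
  induction hn : (Finset.univ.filter fun i => h (X i) ≠ 0).card using Nat.strong_induction_on
    generalizing h with
  | _ n ih =>
  by_contra! hneg
  have h0 : h ≠ 0 := by rintro rfl; simp at hneg
  obtain ⟨k, hk, hkc⟩ : ∃ k : W →ₗ[ℝ] ℝ, (∀ i, h (X i) = 0 → k (X i) = 0) ∧
      ∀ c : ℝ, k ≠ c • h := by
    by_contra! hcon
    exact absurd (hp h h0 hX hcon) (not_le.2 hneg)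
  obtain ⟨g, hgp, hgz, i₀, hi₀⟩ : ∃ g : W →ₗ[ℝ] ℝ, g p = 0 ∧
      (∀ i, h (X i) = 0 → g (X i) = 0) ∧ ∃ i, g (X i) < 0 := by
    -- Correct `k` by a multiple of `h` so that it vanishes at `p`.
    let g := k - (k p / h p) • h
    have hg0 : g ≠ 0 := sub_ne_zero.2 (hkc _)
    have hgp : g p = 0 := by simp [g, hneg.ne]
    have hgz : ∀ i, h (X i) = 0 → g (X i) = 0 := fun i hi => by simp [g, hi, hk i hi]
    obtain ⟨i, hi⟩ : ∃ i, g (X i) ≠ 0 := by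
      by_contra! hcon
      exact hg0 (hspan g hcon)
    rcases lt_or_gt_of_ne hi with h1 | h1
    · exact ⟨g, hgp, hgz, i, h1⟩
    · exact ⟨-g, by simp [hgp], fun j hj => by simp [hgz j hj], i, by simpa using h1⟩
  -- The largest step in direction `g` that keeps the form nonnegative at all generators.
  obtain ⟨j, hj, hmin⟩ := Finset.exists_min_image (Finset.univ.filter fun i => g (X i) < 0)
    (fun i => h (X i) / -g (X i)) ⟨i₀, by simpa using hi₀⟩
  have hjneg : g (X j) < 0 := by simpa using hj
  set t := h (X j) / -g (X j) with ht
  have ht0 : 0 ≤ t := div_nonneg (hX j) (by linarith)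
  have htj : h (X j) + t * g (X j) = 0 := by
    rw [ht, div_neg, neg_mul, div_mul_cancel₀ _ hjneg.ne, add_neg_cancel]
  have hhj : h (X j) ≠ 0 := fun h1 => hjneg.ne (hgz j h1)
  refine absurd (ih _ ?_ (h + t • g) ?_ rfl) (not_le.2 (by simpa [hgp] using hneg))
  · rw [← hn]
    refine Finset.card_lt_card ((Finset.ssubset_iff_of_subset ?_).2 ⟨j, by simpa using hhj, ?_⟩)
    · intro i hi
      rw [Finset.mem_filter] at hi ⊢
      refine ⟨hi.1, fun h1 => hi.2 ?_⟩
      simp [h1, hgz i h1]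
    · simp [htj]
  · intro i
    simp only [LinearMap.add_apply, LinearMap.smul_apply, smul_eq_mul]
    rcases lt_or_ge (g (X i)) 0 with h1 | h1
    · have h2 := hmin i (by simpa using h1)
      rw [le_div_iff₀ (by linarith)] at h2
      linarith
    · exact add_nonneg (hX i) (mul_nonneg ht0 h1)

end Linear

/-! ### Forms on the cone over the independence polytope -/

section Polytope

set_option linter.unusedSectionVars false

variable {V E : Type*} [Fintype V] [DecidableEq V] [Fintype E] [DecidableEq E]
  {G : Multigraph V E}

/-- The indicator vector of `I`, placed at height one. -/
def vtx (I : Finset E) : (E → ℝ) × ℝ := (fun e => if e ∈ I then 1 else 0, 1)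

lemma form_apply (h : ((E → ℝ) × ℝ) →ₗ[ℝ] ℝ) (x : E → ℝ) (t : ℝ) :
    h (x, t) = t * h (0, 1) + ∑ e, x e * h (Pi.single e 1, 0) := by
  have h1 : ((x, t) : (E → ℝ) × ℝ) =
      t • ((0 : E → ℝ), (1 : ℝ)) + ∑ e, x e • ((Pi.single e 1 : E → ℝ), (0 : ℝ)) := by
    refine Prod.ext ?_ ?_
    · ext f
      simp [Prod.fst_sum, Finset.sum_apply, Pi.single_apply]
    · simp [Prod.snd_sum]
  rw [h1, map_add, map_smul, map_sum]
  simp only [map_smul, smul_eq_mul]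

lemma form_vtx (h : ((E → ℝ) × ℝ) →ₗ[ℝ] ℝ) (I : Finset E) :
    h (vtx I) = h (0, 1) + ∑ e ∈ I, h (Pi.single e 1, 0) := by
  rw [vtx, form_apply]
  simp

lemma form_vtx_insert (h : ((E → ℝ) × ℝ) →ₗ[ℝ] ℝ) {I : Finset E} {e : E} (he : e ∉ I) :
    h (vtx (insert e I)) = h (vtx I) + h (Pi.single e 1, 0) := by
  rw [form_vtx, form_vtx, Finset.sum_insert he]
  ring

lemma form_vtx_empty (h : ((E → ℝ) × ℝ) →ₗ[ℝ] ℝ) : h (vtx ∅) = h (0, 1) := by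
  simp [form_vtx]

lemma form_single (h : ((E → ℝ) × ℝ) →ₗ[ℝ] ℝ) (e : E) :
    h (Pi.single e 1, 0) = h (vtx {e}) - h (vtx ∅) := by
  simp [form_vtx]

/-- A form vanishing on all vertices vanishes. -/
lemma form_eq_zero (k : ((E → ℝ) × ℝ) →ₗ[ℝ] ℝ) (hk : ∀ I, Sparse G I → k (vtx I) = 0) :
    k = 0 := by
  have h0 := hk ∅ sparse_empty
  have h1 : k (0, 1) = 0 := by rw [← form_vtx_empty, h0]
  refine LinearMap.ext fun ⟨x, t⟩ => ?_
  rw [form_apply, h1]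
  have h2 : ∀ e, k (Pi.single e 1, 0) = 0 := fun e => by
    rw [form_single, h0, hk {e} (sparse_singleton e), sub_zero]
  simp [h2]

lemma polytope_eq (G : Multigraph V E) :
    multiIndepPolytope G = convexHull ℝ {x | ∃ I, Sparse G I ∧ x = (vtx I).1} := by
  classical
  unfold multiIndepPolytope
  congr 1
  ext x
  constructor
  · rintro ⟨I, hI, rfl⟩
    refine ⟨I.toFinset, forest_iff_sparse.1 (by simpa using hI), ?_⟩
    ext e
    simp [vtx, Set.indicator_apply]
  · rintro ⟨I, hI, rfl⟩
    refine ⟨I, forest_iff_sparse.2 hI, ?_⟩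
    ext e
    simp [vtx, Set.indicator_apply]

lemma vtx_mem {I : Finset E} (hI : Sparse G I) : (vtx I).1 ∈ multiIndepPolytope G := by
  rw [polytope_eq]
  exact subset_convexHull ℝ _ ⟨I, hI, rfl⟩

lemma vtx_mem_cone {I : Finset E} (hI : Sparse G I) : vtx I ∈ coneOver (multiIndepPolytope G) :=
  ⟨1, (vtx I).1, vtx_mem hI, zero_le_one, by simp [vtx]⟩

/-- A form is nonnegative on the polytope if it is so on the vertices, and a second form that
vanishes on those vertices where the first one does vanishes wherever the first one does. -/
lemma polytope_face {h k : ((E → ℝ) × ℝ) →ₗ[ℝ] ℝ} (hh : ∀ I, Sparse G I → 0 ≤ h (vtx I))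
    (hk : ∀ I, Sparse G I → h (vtx I) = 0 → k (vtx I) = 0) {p : E → ℝ}
    (hp : p ∈ multiIndepPolytope G) : 0 ≤ h (p, 1) ∧ (h (p, 1) = 0 → k (p, 1) = 0) := by
  rw [polytope_eq] at hp
  refine convexHull_min (t := {p | 0 ≤ h (p, 1) ∧ (h (p, 1) = 0 → k (p, 1) = 0)}) ?_ ?_ hp
  · rintro x ⟨I, hI, rfl⟩
    exact ⟨hh I hI, hk I hI⟩
  · rintro x ⟨hx, hx'⟩ y ⟨hy, hy'⟩ a b ha hb hab
    have h1 : ((a • x + b • y, 1) : (E → ℝ) × ℝ) = a • (x, 1) + b • (y, 1) := by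
      simp [hab]
    simp only [Set.mem_ofPred_eq, h1, map_add, map_smul, smul_eq_mul]
    have h2 := mul_nonneg ha hx
    have h3 := mul_nonneg hb hy
    refine ⟨by linarith, fun h4 => ?_⟩
    have h5 : a * h (x, 1) = 0 := by linarith
    have h6 : b * h (y, 1) = 0 := by linarith
    have h7 : a * k (x, 1) = 0 := by
      rcases mul_eq_zero.1 h5 with h | h
      · simp [h]
      · simp [hx' h]
    have h8 : b * k (y, 1) = 0 := by
      rcases mul_eq_zero.1 h6 with h | h
      · simp [h]
      · simp [hy' h]
    rw [h7, h8, add_zero]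

lemma cone_face {h k : ((E → ℝ) × ℝ) →ₗ[ℝ] ℝ} (hh : ∀ I, Sparse G I → 0 ≤ h (vtx I))
    (hk : ∀ I, Sparse G I → h (vtx I) = 0 → k (vtx I) = 0) {y : (E → ℝ) × ℝ}
    (hy : y ∈ coneOver (multiIndepPolytope G)) : 0 ≤ h y ∧ (h y = 0 → k y = 0) := by
  obtain ⟨t, p, hp, ht, rfl⟩ := hy
  have h1 : ((t • p, t) : (E → ℝ) × ℝ) = t • (p, 1) := by simp
  obtain ⟨h2, h3⟩ := polytope_face hh hk hp
  rw [h1, map_smul, map_smul, smul_eq_mul, smul_eq_mul]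
  refine ⟨mul_nonneg ht h2, fun h4 => ?_⟩
  rcases mul_eq_zero.1 h4 with h | h
  · simp [h]
  · simp [h3 h]

lemma span_cone (G : Multigraph V E) :
    Submodule.span ℝ (coneOver (multiIndepPolytope G)) = ⊤ := by
  by_contra hne
  obtain ⟨f, hf, hle⟩ := Submodule.exists_le_ker_of_lt_top _ (lt_top_iff_ne_top.2 hne)
  exact hf (form_eq_zero (G := G) f fun I hI => hle (Submodule.subset_span (vtx_mem_cone hI)))

/-- Facet forms, tested on the vertices: nonzero forms that are nonnegative on the vertices and
are determined up to scaling by the vertices at which they vanish. -/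
def VFacet (G : Multigraph V E) (h : ((E → ℝ) × ℝ) →ₗ[ℝ] ℝ) : Prop :=
  h ≠ 0 ∧ (∀ I, Sparse G I → 0 ≤ h (vtx I)) ∧
    ∀ k : ((E → ℝ) × ℝ) →ₗ[ℝ] ℝ, (∀ I, Sparse G I → h (vtx I) = 0 → k (vtx I) = 0) →
      ∃ c : ℝ, k = c • h

lemma isFacetForm_iff {h : ((E → ℝ) × ℝ) →ₗ[ℝ] ℝ} :
    IsFacetForm (multiIndepPolytope G) h ↔ VFacet G h := by
  unfold IsFacetForm
  rw [span_cone, finrank_top]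
  constructor
  · rintro ⟨h1, h2⟩
    have hh : ∀ I, Sparse G I → 0 ≤ h (vtx I) := fun I hI => h1 _ (vtx_mem_cone hI)
    have h0 : h ≠ 0 := by
      rintro rfl
      have h3 : {y ∈ coneOver (multiIndepPolytope G) |
          (0 : ((E → ℝ) × ℝ) →ₗ[ℝ] ℝ) y = 0} = coneOver (multiIndepPolytope G) := by
        ext
        simp
      rw [h3, span_cone, finrank_top] at h2
      omega
    rw [finrank_span_add_one_iff h0 fun z hz => hz.2] at h2
    exact ⟨h0, hh, fun k hk => h2 k fun z hz => (cone_face hh hk hz.1).2 hz.2⟩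
  · rintro ⟨h0, hh, h2⟩
    refine ⟨fun y hy => (cone_face (k := 0) hh (by simp) hy).1, ?_⟩
    rw [finrank_span_add_one_iff h0 fun z hz => hz.2]
    exact fun k hk => h2 k fun I hI hz => hk _ ⟨vtx_mem_cone hI, hz⟩

lemma vtx_mem_lattice {I : Finset E} (hI : Sparse G I) :
    vtx I ∈ coneLattice (multiIndepPolytope G) := by
  refine Submodule.subset_span ⟨(vtx I).1, vtx_mem hI, fun e => ?_, rfl⟩
  by_cases h : e ∈ I
  · exact ⟨1, by simp [vtx, h]⟩
  · exact ⟨0, by simp [vtx, h]⟩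

lemma height_mem_lattice : ((0 : E → ℝ), (1 : ℝ)) ∈ coneLattice (multiIndepPolytope G) := by
  have := vtx_mem_lattice (G := G) sparse_empty
  have h : vtx (∅ : Finset E) = (0, 1) := by
    refine Prod.ext ?_ rfl
    ext e
    simp [vtx]
  rwa [h] at this

lemma single_mem_lattice (e : E) :
    ((Pi.single e 1 : E → ℝ), (0 : ℝ)) ∈ coneLattice (multiIndepPolytope G) := by
  have := sub_mem (vtx_mem_lattice (G := G) (sparse_singleton e))
    (vtx_mem_lattice (G := G) sparse_empty)
  have h : vtx {e} - vtx (∅ : Finset E) = (Pi.single e 1, 0) := by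
    refine Prod.ext ?_ (by simp [vtx])
    ext f
    simp [vtx, Pi.single_apply]
  rwa [h] at this

/-- The lattice spanned by the polytope consists of integer points. -/
lemma lattice_int {y : (E → ℝ) × ℝ} (hy : y ∈ coneLattice (multiIndepPolytope G)) :
    (∀ e, ∃ z : ℤ, y.1 e = z) ∧ ∃ z : ℤ, y.2 = z := by
  induction hy using Submodule.span_induction with
  | mem x hx =>
    obtain ⟨p, -, hp, rfl⟩ := hx
    exact ⟨hp, 1, by simp⟩
  | zero => exact ⟨fun e => ⟨0, by simp⟩, 0, by simp⟩
  | add x y _ _ hx hy =>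
    refine ⟨fun e => ?_, ?_⟩
    · obtain ⟨a, ha⟩ := hx.1 e
      obtain ⟨b, hb⟩ := hy.1 e
      exact ⟨a + b, by simp [ha, hb]⟩
    · obtain ⟨a, ha⟩ := hx.2
      obtain ⟨b, hb⟩ := hy.2
      exact ⟨a + b, by simp [ha, hb]⟩
  | smul n x _ hx =>
    refine ⟨fun e => ?_, ?_⟩
    · obtain ⟨a, ha⟩ := hx.1 e
      exact ⟨n * a, by simp [ha]⟩
    · obtain ⟨a, ha⟩ := hx.2
      exact ⟨n * a, by simp [ha]⟩

end Polytope

/-! ### The facets of the independence polytope -/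

section Facets

set_option linter.unusedSectionVars false

variable {V E : Type*} [Fintype V] [DecidableEq V] [Fintype E] [DecidableEq E]
  {G : Multigraph V E}

/-- The form `(x, t) ↦ x e`, whose nonnegativity is the coordinate inequality at `e`. -/
def coordForm (e : E) : ((E → ℝ) × ℝ) →ₗ[ℝ] ℝ :=
  LinearMap.proj e ∘ₗ LinearMap.fst ℝ (E → ℝ) ℝ

/-- The form `(x, t) ↦ (|S| - 1) t - x(E(S))`, whose nonnegativity is the rank inequality of
the edge set `E(S)`. -/
noncomputable def setForm (G : Multigraph V E) (S : Finset V) : ((E → ℝ) × ℝ) →ₗ[ℝ] ℝ :=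
  ((S.card : ℝ) - 1) • LinearMap.snd ℝ (E → ℝ) ℝ - ∑ e ∈ ins G S, coordForm e

lemma coordForm_apply (e : E) (x : E → ℝ) (t : ℝ) : coordForm e (x, t) = x e := rfl

lemma coordForm_vtx (e : E) (I : Finset E) : coordForm e (vtx I) = if e ∈ I then 1 else 0 := rfl

lemma setForm_apply (S : Finset V) (x : E → ℝ) (t : ℝ) :
    setForm G S (x, t) = ((S.card : ℝ) - 1) * t - ∑ e ∈ ins G S, x e := by
  simp [setForm, LinearMap.sum_apply, coordForm_apply]

lemma setForm_vtx (S : Finset V) (I : Finset E) :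
    setForm G S (vtx I) = (S.card : ℝ) - 1 - cnt G I S := by
  rw [vtx, setForm_apply, cnt, Finset.inter_comm]
  simp

lemma setForm_vtx_eq_zero {S : Finset V} (hS : S.Nonempty) (I : Finset E) :
    setForm G S (vtx I) = 0 ↔ Tight G I S := by
  rw [setForm_vtx, Tight, and_iff_right hS, ← Nat.cast_inj (R := ℝ)]
  push_cast
  constructor <;> intro h <;> linarith

lemma setForm_single (S : Finset V) (e : E) :
    setForm G S (Pi.single e 1, 0) = -if e ∈ ins G S then 1 else 0 := by
  simp [setForm_apply, Pi.single_apply]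

lemma setForm_height (S : Finset V) : setForm G S (0, 1) = (S.card : ℝ) - 1 := by
  simp [setForm_apply]

lemma form_ext {h k : ((E → ℝ) × ℝ) →ₗ[ℝ] ℝ} (h1 : h (0, 1) = k (0, 1))
    (h2 : ∀ e, h (Pi.single e 1, 0) = k (Pi.single e 1, 0)) : h = k := by
  refine LinearMap.ext fun ⟨x, t⟩ => ?_
  rw [form_apply h, form_apply k, h1]
  simp [h2]

lemma CutTC.nonempty {S : Finset V} (h : CutTC G S) : S.Nonempty :=
  Finset.card_pos.1 (by have := h.1; omega)

lemma CutTC.one_lt {S : Finset V} (h : CutTC G S) : (1 : ℝ) < S.card := by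
  exact_mod_cast h.1

lemma CutTC.exists_mem_ins {S : Finset V} (h : CutTC G S) : ∃ e, e ∈ ins G S := by
  obtain ⟨v, hv⟩ := h.nonempty
  obtain ⟨e, a, ha, he⟩ := h.exists_edge hv
  exact ⟨e, (mem_ins_of_eq he).2 ⟨hv, ha⟩⟩

lemma vfacet_coordForm (e : E) : VFacet G (coordForm e) := by
  refine ⟨fun h => ?_, fun I _ => ?_, fun k hk => ?_⟩
  · have := congrArg (fun f => f (Pi.single e 1, 0)) h
    simp [coordForm_apply] at this
  · rw [coordForm_vtx]
    positivity
  · have h0 := hk ∅ sparse_empty (by simp [coordForm_vtx])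
    refine ⟨k (Pi.single e 1, 0), form_ext ?_ fun f => ?_⟩
    · rw [← form_vtx_empty, h0]
      simp [coordForm_apply]
    · by_cases hfe : f = e
      · subst hfe
        simp [coordForm_apply]
      · rw [form_single k f, h0, hk {f} (sparse_singleton f)]
        · simp [coordForm_apply, Ne.symm hfe]
        · simp [coordForm_vtx, Ne.symm hfe]

/-- The rank inequality of a `2`-connected set `S` defines a facet.  A form vanishing at all
forests that span `S` vanishes at the edges outside `E(S)`.  For any vertex `v` of `S`, a spanning
tree of `S - v` can be completed by any edge joining `v` to `S`, so the form takes equal values at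
these edges; by connectedness it is constant on `E(S)`. -/
lemma vfacet_setForm {S : Finset V} (hS : CutTC G S) : VFacet G (setForm G S) := by
  have hne := hS.nonempty
  refine ⟨fun h => ?_, fun I hI => ?_, fun k hk => ?_⟩
  · have h1 := setForm_height (G := G) S
    have h2 := hS.one_lt
    rw [h, LinearMap.zero_apply] at h1
    linarith
  · have h1 := hI S hne
    rw [← Nat.cast_le (α := ℝ)] at h1
    push_cast at h1
    rw [setForm_vtx]
    linarith
  · have hk' : ∀ I, Sparse G I → Tight G I S → k (vtx I) = 0 := fun I hI ht =>
      hk I hI ((setForm_vtx_eq_zero hne I).2 ht)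
    obtain ⟨I₀, hI₀, hIS₀, ht₀⟩ := exists_tight_of_crossed hne hS.2.1
    have hout : ∀ g, g ∉ ins G S → k (Pi.single g 1, 0) = 0 := by
      intro g hg
      have hgI : g ∉ I₀ := fun h => hg (hIS₀ h)
      have h1 := hk' _ (sparse_insert_of_notMem_ins hI₀ hIS₀ hg)
        ⟨hne, by rw [cnt_insert hgI, if_neg hg, add_zero, ht₀.2]⟩
      rwa [form_vtx_insert k hgI, hk' _ hI₀ ht₀, zero_add] at h1
    have hstar : ∀ v ∈ S, ∀ a ∈ S, ∀ b ∈ S, ∀ e f, G.ends e = s(v, a) → G.ends f = s(v, b) →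
        k (Pi.single e 1, 0) = k (Pi.single f 1, 0) := by
      intro v hv a ha b hb e f he hf
      have hn : (S.erase v).Nonempty := by
        rw [← Finset.card_pos, Finset.card_erase_of_mem hv]
        have := hS.1
        omega
      obtain ⟨I, hI, hIS, ht⟩ := exists_tight_of_crossed hn (hS.2.2 v hv)
      have hnot : ∀ g c, G.ends g = s(v, c) → g ∉ I := fun g c hg h => by
        have := (mem_ins_of_eq hg).1 (hIS h)
        simp at this
      obtain ⟨h1, -, h2⟩ := tight_insert_pendant hI hIS ht hv ha he
      obtain ⟨h3, -, h4⟩ := tight_insert_pendant hI hIS ht hv hb hf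
      have h5 := hk' _ h1 h2
      have h6 := hk' _ h3 h4
      rw [form_vtx_insert k (hnot e a he)] at h5
      rw [form_vtx_insert k (hnot f b hf)] at h6
      linarith
    obtain ⟨v₀, hv₀⟩ := hne
    obtain ⟨e₀, a₀, ha₀, he₀⟩ := hS.exists_edge hv₀
    set κ := k (Pi.single e₀ 1, 0) with hκ
    have hin : ∀ v ∈ S, ∀ a ∈ S, ∀ e, G.ends e = s(v, a) → k (Pi.single e 1, 0) = κ := by
      classical
      let p : V → Prop := fun v => ∀ a ∈ S, ∀ e, G.ends e = s(v, a) → k (Pi.single e 1, 0) = κ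
      by_contra! hcon
      obtain ⟨v, hv, a, ha, e, he, hek⟩ := hcon
      obtain ⟨f, x, hx, y, hy, hf⟩ := hS.2.1 (S.filter p) (S.filter fun v => ¬ p v)
        ⟨v₀, Finset.mem_filter.2 ⟨hv₀, fun b hb f hf => hstar v₀ hv₀ b hb a₀ ha₀ f e₀ hf he₀⟩⟩
        ⟨v, Finset.mem_filter.2 ⟨hv, fun h => hek (h a ha e he)⟩⟩
        (Finset.disjoint_filter_filter_not S S p) (Finset.filter_union_filter_not_eq p S)
      rw [Finset.mem_filter] at hx hy
      refine hy.2 fun b hb g hg => ?_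
      rw [← hx.2 y hy.1 f hf]
      exact hstar y hy.1 b hb x hx.1 g f hg (by rw [hf, Sym2.eq_swap])
    have hins : ∀ e ∈ ins G S, k (Pi.single e 1, 0) = κ := by
      intro e he
      obtain ⟨a, b, -, hab⟩ := exists_ends G e
      rw [mem_ins_of_eq hab] at he
      exact hin a he.1 b he.2 e hab
    refine ⟨-κ, form_ext ?_ fun e => ?_⟩
    · have h1 := hk' _ hI₀ ht₀
      rw [form_vtx, Finset.sum_congr rfl fun e he => hins e (hIS₀ he)] at h1
      have h2 := ht₀.2
      rw [cnt, Finset.inter_eq_left.2 hIS₀, ← Nat.cast_inj (R := ℝ)] at h2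
      push_cast at h2
      rw [LinearMap.smul_apply, setForm_height, ← h2]
      simp only [Finset.sum_const, nsmul_eq_mul, smul_eq_mul] at h1 ⊢
      linarith
    · rw [LinearMap.smul_apply, setForm_single]
      split_ifs with he
      · simp [hins e he]
      · simp [hout e he]

/-- Every facet of the independence polytope is a coordinate facet or is given by the rank
inequality of a `2`-connected vertex set.  Read the facet form as `c - w`.  If every edge lies
in some independent set on the facet, these sets are the independent sets of maximum weight and
`w` is nonnegative, so they are all tight on a common `2`-connected set.  An edge lying in no
independent set on the facet yields a coordinate facet. -/
lemma VFacet.classify [Nonempty E] {h : ((E → ℝ) × ℝ) →ₗ[ℝ] ℝ} (hh : VFacet G h) :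
    (∃ e, ∃ c : ℝ, 0 < c ∧ h = c • coordForm e) ∨
      ∃ S, CutTC G S ∧ ∃ c : ℝ, 0 < c ∧ h = c • setForm G S := by
  obtain ⟨h0, hnn, hfac⟩ := hh
  have hscale : ∀ (k : ((E → ℝ) × ℝ) →ₗ[ℝ] ℝ) (I : Finset E), Sparse G I → 0 < k (vtx I) →
      (∀ J, Sparse G J → h (vtx J) = 0 → k (vtx J) = 0) → ∃ c : ℝ, 0 < c ∧ h = c • k := by
    intro k I hI hpos hk
    obtain ⟨c, rfl⟩ := hfac k hk
    rw [LinearMap.smul_apply, smul_eq_mul] at hpos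
    have hc : 0 < c := pos_of_mul_pos_left hpos (hnn I hI)
    exact ⟨c⁻¹, inv_pos.2 hc, by rw [smul_smul, inv_mul_cancel₀ hc.ne', one_smul]⟩
  by_cases hcov : ∀ e, ∃ I, Sparse G I ∧ h (vtx I) = 0 ∧ e ∈ I
  · right
    have hwnn : ∀ e, 0 ≤ -h (Pi.single e 1, 0) := by
      intro e
      obtain ⟨I, hI, hI0, he⟩ := hcov e
      have h1 := hnn _ (hI.subset (Finset.erase_subset e I))
      have h2 := form_vtx_insert h (Finset.notMem_erase e I)
      rw [Finset.insert_erase he] at h2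
      linarith
    have hpos : ∃ e, 0 < -h (Pi.single e 1, 0) := by
      by_contra! hcon
      have h1 : ∀ e, h (Pi.single e 1, 0) = 0 := fun e => by
        have := hcon e
        have := hwnn e
        linarith
      obtain ⟨I, -, hI0, -⟩ := hcov (Classical.arbitrary E)
      rw [form_vtx] at hI0
      simp only [h1, Finset.sum_const_zero, add_zero] at hI0
      exact h0 (form_ext (by simpa using hI0) fun e => by simpa using h1 e)
    -- On the facet `w(I) = c`, and `w(J) ≤ c` for every independent `J`, with `c = h (0, 1)`.
    obtain ⟨S, hS, hSt⟩ := exists_common_tight (G := G) (w := fun e => -h (Pi.single e 1, 0))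
      (F := {I | Sparse G I ∧ h (vtx I) = 0})
      (by
        obtain ⟨I, hI, hI0, -⟩ := hcov (Classical.arbitrary E)
        exact ⟨I, hI, hI0⟩)
      (fun I hI => hI.1)
      (fun I hI J hJ => by
        have h1 := hnn J hJ
        have h2 := hI.2
        rw [form_vtx] at h1 h2
        simp only [Finset.sum_neg_distrib]
        linarith)
      hpos
    refine ⟨S, hS, hscale _ ∅ sparse_empty ?_ fun J hJ hJ0 =>
      (setForm_vtx_eq_zero hS.nonempty J).2 (hSt J ⟨hJ, hJ0⟩)⟩
    rw [form_vtx_empty, setForm_height]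
    linarith [hS.one_lt]
  · left
    push Not at hcov
    obtain ⟨e, he⟩ := hcov
    refine ⟨e, hscale _ {e} (sparse_singleton e) (by simp [coordForm_vtx]) fun J hJ hJ0 => ?_⟩
    rw [coordForm_vtx, if_neg (he J hJ hJ0)]

lemma reduced_coordForm (e : E) : IsReducedForm (multiIndepPolytope G) (coordForm e) :=
  ⟨fun _ hy => (lattice_int hy).1 e, _, single_mem_lattice e, by simp [coordForm_apply]⟩

lemma reduced_setForm {S : Finset V} (hS : CutTC G S) :
    IsReducedForm (multiIndepPolytope G) (setForm G S) := by
  obtain ⟨e, he⟩ := hS.exists_mem_ins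
  refine ⟨fun y hy => ?_, _, neg_mem (single_mem_lattice e), ?_⟩
  · obtain ⟨h1, n, h2⟩ := lattice_int hy
    choose z hz using h1
    refine ⟨(S.card - 1) * n - ∑ e ∈ ins G S, z e, ?_⟩
    obtain ⟨x, t⟩ := y
    rw [setForm_apply]
    simp only at hz h2
    push_cast
    simp [hz, h2]
  · rw [map_neg, setForm_single, if_pos he, neg_neg]

/-- Among the positive multiples of a reduced form only the form itself is reduced. -/
lemma reduced_smul {P : Set (E → ℝ)} {k : ((E → ℝ) × ℝ) →ₗ[ℝ] ℝ} (hk : IsReducedForm P k)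
    {c : ℝ} (hc : 0 < c) (h : IsReducedForm P (c • k)) : c • k = k := by
  obtain ⟨y, hy, hy1⟩ := hk.2
  obtain ⟨a, ha⟩ := h.1 y hy
  obtain ⟨x, hx, hx1⟩ := h.2
  obtain ⟨b, hb⟩ := hk.1 x hx
  rw [LinearMap.smul_apply, hy1, smul_eq_mul, mul_one] at ha
  rw [LinearMap.smul_apply, hb, smul_eq_mul, ha] at hx1
  have h1 : a * b = 1 := by exact_mod_cast hx1
  -- The factor `c` is an integer, and it divides `1`.
  have h2 : 0 ≤ a := by
    rw [ha] at hc
    exact_mod_cast hc.le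
  rw [ha, Int.eq_one_of_mul_eq_one_right h2 h1, Int.cast_one, one_smul]

/-- For a graph with at least one edge, the reduced facet forms are the coordinate forms and
the rank forms of `2`-connected sets. -/
lemma facet_reduced_iff [Nonempty E] {h : ((E → ℝ) × ℝ) →ₗ[ℝ] ℝ} :
    IsFacetForm (multiIndepPolytope G) h ∧ IsReducedForm (multiIndepPolytope G) h ↔
      (∃ e, h = coordForm e) ∨ ∃ S, CutTC G S ∧ h = setForm G S := by
  rw [isFacetForm_iff]
  constructor
  · rintro ⟨hf, hr⟩
    rcases hf.classify with ⟨e, c, hc, rfl⟩ | ⟨S, hS, c, hc, rfl⟩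
    · exact Or.inl ⟨e, reduced_smul (reduced_coordForm e) hc hr⟩
    · exact Or.inr ⟨S, hS, reduced_smul (reduced_setForm hS) hc hr⟩
  · rintro (⟨e, rfl⟩ | ⟨S, hS, rfl⟩)
    · exact ⟨vfacet_coordForm e, reduced_coordForm e⟩
    · exact ⟨vfacet_setForm hS, reduced_setForm hS⟩

end Facets

/-! ### The Gorenstein point and blow-ups -/

section Gorenstein

set_option linter.unusedSectionVars false

variable {V E : Type*} [Fintype V] [DecidableEq V] [Fintype E] [DecidableEq E]
  {G : Multigraph V E}

/-- A nonnegative vector satisfying all rank inequalities of `2`-connected sets, scaled by `δ`,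
lies in the `δ`-th dilate of the independence polytope. -/
lemma mem_dilate [Nonempty E] {δ : ℝ} (hδ : 0 < δ) {v : E → ℝ} (hv : ∀ e, 0 ≤ v e)
    (hS : ∀ S, CutTC G S → 0 ≤ setForm G S (v, δ)) : v ∈ δ • multiIndepPolytope G := by
  rw [Set.mem_smul_set_iff_inv_smul_mem₀ hδ.ne']
  by_contra hnot
  have hfin : {x | ∃ I, Sparse G I ∧ x = (vtx I).1}.Finite :=
    (Set.finite_range fun I : Finset E => (vtx I).1).subset (by
      rintro x ⟨I, -, rfl⟩
      exact ⟨I, rfl⟩)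
  have hcl : IsClosed (multiIndepPolytope G) := by
    rw [polytope_eq]
    exact hfin.isClosed_convexHull ℝ
  obtain ⟨f, u, hfu, hu⟩ :=
    geometric_hahn_banach_closed_point (s := multiIndepPolytope G) (convex_convexHull ℝ _) hcl hnot
  have := Fintype.ofFinite {I : Finset E // Sparse G I}
  -- The separating functional `f` gives the form `u t - f x`, negative at `(v, δ)`.
  have key := nonneg_of_facets_nonneg (fun I : {I : Finset E // Sparse G I} => vtx I.1)
    (fun k hk => form_eq_zero (G := G) k fun I hI => hk ⟨I, hI⟩) (v, δ)
    (fun h h0 hnn hfac => by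
      have hF : VFacet G h := ⟨h0, fun I hI => hnn ⟨I, hI⟩,
        fun k hk => hfac k fun I => hk I.1 I.2⟩
      rcases hF.classify with ⟨e, c, hc, rfl⟩ | ⟨S, hSt, c, hc, rfl⟩
      · exact mul_nonneg hc.le (hv e)
      · exact mul_nonneg hc.le (hS S hSt))
    (u • LinearMap.snd ℝ (E → ℝ) ℝ - f.toLinearMap ∘ₗ LinearMap.fst ℝ (E → ℝ) ℝ)
    (fun I => by
      have := hfu _ (vtx_mem I.2)
      have h1 : (vtx I.1).2 = 1 := rfl
      simp [h1, this.le])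
  rw [map_smul, smul_eq_mul, inv_mul_eq_div, lt_div_iff₀ hδ] at hu
  simp at key
  linarith

lemma ones_mem_lattice (δ : ℕ) :
    ((fun _ => 1 : E → ℝ), (δ : ℝ)) ∈ coneLattice (multiIndepPolytope G) := by
  have h1 : ((fun _ => 1 : E → ℝ), (δ : ℝ)) =
      (δ : ℤ) • ((0 : E → ℝ), (1 : ℝ)) + ∑ e, ((Pi.single e 1 : E → ℝ), (0 : ℝ)) := by
    refine Prod.ext ?_ ?_
    · ext f
      simp [Prod.fst_sum, Finset.sum_apply, Pi.single_apply]
    · simp [Prod.snd_sum]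
  rw [h1]
  exact add_mem (Submodule.smul_mem _ _ height_mem_lattice)
    (sum_mem fun e _ => single_mem_lattice e)

/-- The coordinate facets force the Gorenstein point to be the all-ones vector; the remaining
facets then give one numerical condition for each `2`-connected vertex set. -/
lemma isDeltaGorenstein_iff [Nonempty E] {δ : ℕ} (hδ : 0 < δ) :
    IsDeltaGorenstein (multiIndepPolytope G) δ ↔
      ∀ S, CutTC G S → (ins G S).card + 1 = δ * (S.card - 1) := by
  have hval : ∀ S, CutTC G S → (setForm G S (fun _ => 1, (δ : ℝ)) = 1 ↔
      (ins G S).card + 1 = δ * (S.card - 1)) := by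
    intro S hS
    have h1 : 1 ≤ S.card := by have := hS.1; omega
    rw [setForm_apply, ← Nat.cast_inj (R := ℝ)]
    push_cast [h1]
    simp only [Finset.sum_const, nsmul_eq_mul, mul_one]
    constructor <;> intro h <;> linarith
  constructor
  · rintro ⟨v, -, -, hv⟩ S hS
    have hv1 : v = fun _ => 1 := by
      ext e
      obtain ⟨h1, h2⟩ := facet_reduced_iff (G := G).2 (Or.inl ⟨e, rfl⟩)
      exact hv _ h1 h2
    subst hv1
    obtain ⟨h1, h2⟩ := facet_reduced_iff (G := G).2 (Or.inr ⟨S, hS, rfl⟩)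
    exact (hval S hS).1 (hv _ h1 h2)
  · intro h
    refine ⟨fun _ => 1, mem_dilate (by exact_mod_cast hδ) (fun _ => zero_le_one) fun S hS => ?_,
      ones_mem_lattice δ, fun k h1 h2 => ?_⟩
    · rw [(hval S hS).2 (h S hS)]
      exact zero_le_one
    · rcases facet_reduced_iff.1 ⟨h1, h2⟩ with ⟨e, rfl⟩ | ⟨S, hS, rfl⟩
      · exact coordForm_apply e _ _
      · exact (hval S hS).2 (h S hS)

lemma IsBlowUp.adj_iff {m : ℕ} {H : SimpleGraph V} (hb : IsBlowUp G m H) (hm : 0 < m) (a b : V) :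
    H.Adj a b ↔ ∃ e, G.ends e = s(a, b) := by
  constructor
  · intro h
    have h1 := hb.1 s(a, b) h
    have h2 : {e : E | G.ends e = s(a, b)}.Nonempty :=
      Set.nonempty_of_ncard_ne_zero (by rw [h1]; exact hm.ne')
    exact h2
  · rintro ⟨e, he⟩
    by_contra h
    have h1 : e ∈ {e : E | G.ends e = s(a, b)} := he
    rw [hb.2 s(a, b) h] at h1
    exact h1

lemma IsBlowUp.card_ins {m : ℕ} {H : SimpleGraph V} (hb : IsBlowUp G m H) (S : Finset V) :
    (ins G S).card = m * (edgesIn H (S : Set V)).ncard := by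
  classical
  have hmem : ∀ p, p ∈ (Set.toFinite (edgesIn H (S : Set V))).toFinset ↔
      p ∈ H.edgeSet ∧ ∀ v ∈ p, v ∈ S := fun p => by simp [edgesIn]
  rw [Set.ncard_eq_toFinset_card _ (Set.toFinite _), mul_comm,
    Finset.card_eq_sum_card_fiberwise (f := G.ends)
      (t := (Set.toFinite (edgesIn H (S : Set V))).toFinset)]
  · rw [Finset.sum_const_nat]
    intro p hp
    rw [hmem] at hp
    rw [← hb.1 p hp.1, ← Set.ncard_coe_finset]
    congr 1
    ext e
    simp only [Finset.coe_filter, mem_ins, Set.mem_ofPred_eq, and_iff_right_iff_imp]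
    rintro rfl
    exact hp.2
  · intro e he
    rw [Finset.mem_coe, mem_ins] at he
    refine Finset.mem_coe.2 ((hmem _).2 ⟨?_, he⟩)
    by_contra h
    have h1 : e ∈ {f : E | G.ends f = G.ends e} := rfl
    rw [hb.2 _ h] at h1
    exact h1

/-- Under a blow-up, `(♣)_δ` is the numerical condition of `isDeltaGorenstein_iff`. -/
lemma IsBlowUp.clubCond_iff {δ : ℕ} (hδ : 2 ≤ δ) {H : SimpleGraph V}
    (hb : IsBlowUp G (δ - 1) H) :
    ClubCond H δ ↔ ∀ S, CutTC G S → (ins G S).card + 1 = δ * (S.card - 1) := by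
  classical
  have hadj := hb.adj_iff (by omega)
  constructor
  · intro h S hS
    have h1 := h S ((isTwoConnected_iff hadj S).2 hS)
    rwa [← hb.card_ins, Set.ncard_coe_finset] at h1
  · intro h S hS
    obtain ⟨T, rfl⟩ : ∃ T : Finset V, (T : Set V) = S := ⟨S.toFinset, by simp⟩
    rw [← hb.card_ins, Set.ncard_coe_finset]
    exact h T ((isTwoConnected_iff hadj T).1 hS)

/-- The numerical condition for the endpoints of an edge says that all edges of `G` have
multiplicity `δ - 1`. -/
lemma isBlowUp_of_card {δ : ℕ}
    (h : ∀ S, CutTC G S → (ins G S).card + 1 = δ * (S.card - 1)) :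
    IsBlowUp G (δ - 1) G.toSimple := by
  have hmem : ∀ p, p ∈ G.toSimple.edgeSet ↔ ∃ e, G.ends e = p := by
    intro p
    simp only [Multigraph.toSimple, SimpleGraph.edgeSet_fromEdgeSet, Set.mem_sdiff, Set.mem_range]
    refine ⟨fun h => h.1, ?_⟩
    rintro ⟨e, rfl⟩
    exact ⟨⟨e, rfl⟩, G.loopless e⟩
  refine ⟨fun p hp => ?_, fun p hp => ?_⟩
  · obtain ⟨e, rfl⟩ := (hmem p).1 hp
    obtain ⟨a, b, hab, he⟩ := exists_ends G e
    have h1 := h _ (cutTC_pair hab he)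
    rw [Finset.card_pair hab] at h1
    -- By looplessness, the edges inside `{a, b}` are precisely those parallel to `e`.
    have h2 : {f : E | G.ends f = G.ends e} = (ins G {a, b} : Set E) := by
      ext f
      obtain ⟨c, d, hcd, hf⟩ := exists_ends G f
      rw [Finset.mem_coe, mem_ins_of_eq hf, Set.mem_ofPred_eq, he, hf, Sym2.eq_iff]
      simp only [Finset.mem_insert, Finset.mem_singleton]
      constructor
      · tauto
      · rintro ⟨rfl | rfl, rfl | rfl⟩ <;> tauto
    rw [h2, Set.ncard_coe_finset]
    omega
  · ext f
    simp only [Set.mem_ofPred_eq, Set.mem_empty_iff_false, iff_false]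
    exact fun hf => hp ((hmem p).2 ⟨f, hf⟩)

/-- Without edges the polytope is a point, whose cone is a ray. -/
lemma isGorenstein_of_isEmpty [IsEmpty E] : IsGorenstein (multiIndepPolytope G) := by
  have hv : (0 : E → ℝ) ∈ multiIndepPolytope G := by
    convert vtx_mem (G := G) sparse_empty
  refine ⟨1, one_pos, 0, ?_, by simpa using height_mem_lattice, fun h hf hr => ?_⟩
  · simpa using hv
  · obtain ⟨y, hy, hy1⟩ := hr.2
    obtain ⟨z, hz⟩ := hr.1 _ height_mem_lattice
    obtain ⟨-, n, hn⟩ := lattice_int hy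
    have hnn := (isFacetForm_iff.1 hf).2.1 ∅ sparse_empty
    rw [form_vtx_empty, hz] at hnn
    have h2 : h y = n * z := by
      rw [← hz, ← hn, ← smul_eq_mul, ← map_smul]
      congr 1
      refine Prod.ext (Subsingleton.elim _ _) ?_
      simp
    rw [hy1] at h2
    have h3 : z * n = 1 := by
      rw [mul_comm]
      exact_mod_cast h2.symm
    have h4 := Int.eq_one_of_mul_eq_one_right (by exact_mod_cast hnn) h3
    rw [Nat.cast_one, hz, h4, Int.cast_one]

/-- Without edges any `δ` and the edgeless graph satisfy the combinatorial condition. -/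
lemma exists_blowUp_of_isEmpty [IsEmpty E] : ∃ δ : ℕ, 2 ≤ δ ∧ ∃ H : SimpleGraph V,
    IsBlowUp G (δ - 1) H ∧ ClubCond H δ := by
  have hb : IsBlowUp G (2 - 1) ⊥ := ⟨by simp, fun p _ => Set.eq_empty_of_isEmpty _⟩
  refine ⟨2, le_rfl, ⊥, hb, (hb.clubCond_iff le_rfl).2 fun S hS => ?_⟩
  obtain ⟨e, -⟩ := hS.exists_mem_ins
  exact isEmptyElim e

end Gorenstein

theorem stmt0 {V E : Type*} [Fintype V] [DecidableEq V] [Fintype E]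
    (G : Multigraph V E) :
    IsGorenstein (multiIndepPolytope G) ↔
      ∃ δ : ℕ, 2 ≤ δ ∧ ∃ H : SimpleGraph V, IsBlowUp G (δ - 1) H ∧ ClubCond H δ := by
  classical
  rcases isEmpty_or_nonempty E with hE | hE
  · exact iff_of_true isGorenstein_of_isEmpty exists_blowUp_of_isEmpty
  constructor
  · rintro ⟨δ, hδ, h⟩
    rw [isDeltaGorenstein_iff hδ] at h
    have h2 : 2 ≤ δ := by
      obtain ⟨e⟩ := hE
      obtain ⟨a, b, hab, he⟩ := exists_ends G e
      have h1 := h _ (cutTC_pair hab he)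
      have h3 : 0 < (ins G {a, b}).card :=
        Finset.card_pos.2 ⟨e, (mem_ins_of_eq he).2 (by simp)⟩
      rw [Finset.card_pair hab] at h1
      omega
    have hb := isBlowUp_of_card h
    exact ⟨δ, h2, G.toSimple, hb, (hb.clubCond_iff h2).2 h⟩
  · rintro ⟨δ, h2, H, hb, hH⟩
    exact ⟨δ, by omega, (isDeltaGorenstein_iff (by omega)).2 ((hb.clubCond_iff h2).1 hH)⟩

end Gor
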